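/- arXiv:1312.2809 — 4 statements merged into one kernel-verified Lean document; each statement's English description precedes it below -/
import Mathlib

section
/- For every t ∈ (1,2), the function f_t(x) = 1/((x+1)√((x+1)^t − x^t)) is completely monotone on (0,∞). -/
/-- `f` is completely monotone on `s`: the `n`-th derivative has sign `(-1)^n` on `s`. -/
def CompletelyMonotoneOn (f : ℝ → ℝ) (s : Set ℝ) : Prop :=
  ∀ n : ℕ, ∀ x ∈ s, 0 ≤ (-1 : ℝ) ^ n * iteratedDeriv n f x

/-- `f` and the first `n` iterates of the negated derivative of `f` are nonnegative on `(0, ∞)`. -/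
def AlternatingUpTo : ℕ → (ℝ → ℝ) → Prop
  | 0, f => ∀ x, 0 < x → 0 ≤ f x
  | n + 1, f => (∀ x, 0 < x → 0 ≤ f x) ∧
      ∃ g : ℝ → ℝ, (∀ x, 0 < x → HasDerivAt f (-g x) x) ∧ AlternatingUpTo n g

namespace AlternatingUpTo

lemma nonneg {n : ℕ} {f : ℝ → ℝ} (h : AlternatingUpTo n f) : ∀ x, 0 < x → 0 ≤ f x := by
  cases n with
  | zero => exact h
  | succ n => exact h.1

lemma of_succ {n : ℕ} {f : ℝ → ℝ} (h : AlternatingUpTo (n + 1) f) : AlternatingUpTo n f := by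
  induction n generalizing f with
  | zero => exact h.1
  | succ n ih =>
    obtain ⟨h0, g, hg, hn⟩ := h
    exact ⟨h0, g, hg, ih hn⟩

lemma add {n : ℕ} {f g : ℝ → ℝ} (hf : AlternatingUpTo n f) (hg : AlternatingUpTo n g) :
    AlternatingUpTo n (fun x => f x + g x) := by
  induction n generalizing f g with
  | zero => exact fun x hx => add_nonneg (hf x hx) (hg x hx)
  | succ n ih =>
    obtain ⟨hf0, f', hf', hfn⟩ := hf
    obtain ⟨hg0, g', hg', hgn⟩ := hg
    refine ⟨fun x hx => add_nonneg (hf0 x hx) (hg0 x hx), fun x => f' x + g' x,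
      fun x hx => ?_, ih hfn hgn⟩
    exact ((hf' x hx).add (hg' x hx)).congr_deriv (by ring)

lemma mul {n : ℕ} {f g : ℝ → ℝ} (hf : AlternatingUpTo n f) (hg : AlternatingUpTo n g) :
    AlternatingUpTo n (fun x => f x * g x) := by
  induction n generalizing f g with
  | zero => exact fun x hx => mul_nonneg (hf x hx) (hg x hx)
  | succ n ih =>
    have hf_n := hf.of_succ
    have hg_n := hg.of_succ
    obtain ⟨hf0, f', hf', hfn⟩ := hf
    obtain ⟨hg0, g', hg', hgn⟩ := hg
    refine ⟨fun x hx => mul_nonneg (hf0 x hx) (hg0 x hx),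
      fun x => f' x * g x + f x * g' x, fun x hx => ?_, (ih hfn hg_n).add (ih hf_n hgn)⟩
    exact ((hf' x hx).mul (hg' x hx)).congr_deriv (by ring)

lemma const (n : ℕ) {c : ℝ} (hc : 0 ≤ c) : AlternatingUpTo n (fun _ => c) := by
  induction n generalizing c with
  | zero => exact fun _ _ => hc
  | succ n ih =>
    exact ⟨fun _ _ => hc, fun _ => 0, fun x _ => (hasDerivAt_const x c).congr_deriv (by simp),
      ih le_rfl⟩

/-- A negative power of a positive function with alternating derivative is alternating. -/
lemma rpow_neg {n : ℕ} {φ φ' : ℝ → ℝ} (hpos : ∀ x, 0 < x → 0 < φ x)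
    (hderiv : ∀ x, 0 < x → HasDerivAt φ (φ' x) x) (h : AlternatingUpTo n φ')
    {a : ℝ} (ha : 0 < a) : AlternatingUpTo n (fun x => φ x ^ (-a)) := by
  induction n generalizing a with
  | zero => exact fun x hx => (Real.rpow_pos_of_pos (hpos x hx) _).le
  | succ n ih =>
    refine ⟨fun x hx => (Real.rpow_pos_of_pos (hpos x hx) _).le,
      fun x => a * (φ x ^ (-(a + 1)) * φ' x), fun x hx => ?_,
      (const n ha.le).mul ((ih h.of_succ (by linarith)).mul h.of_succ)⟩
    refine ((hderiv x hx).rpow_const (p := -a) (Or.inl (hpos x hx).ne')).congr_deriv ?_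
    rw [show -(a + 1) = -a - 1 by ring]
    ring

open Filter Topology in
lemma iteratedDeriv_nonneg {n : ℕ} {f : ℝ → ℝ} (h : AlternatingUpTo n f) {x : ℝ} (hx : 0 < x) :
    0 ≤ (-1 : ℝ) ^ n * iteratedDeriv n f x := by
  induction n generalizing f with
  | zero => simpa using h x hx
  | succ n ih =>
    obtain ⟨-, g, hg, hn⟩ := h
    have heq : deriv f =ᶠ[𝓝 x] -g := by
      filter_upwards [lt_mem_nhds hx] with y hy
      exact (hg y hy).deriv
    rw [iteratedDeriv_succ', heq.iteratedDeriv_eq, iteratedDeriv_neg, pow_succ]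
    simpa using ih hn

end AlternatingUpTo

lemma hasDerivAt_rpow_add_one_sub_rpow (s : ℝ) {x : ℝ} (hx : 0 < x) :
    HasDerivAt (fun x : ℝ => (x + 1) ^ s - x ^ s)
      (s * ((x + 1) ^ (s - 1) - x ^ (s - 1))) x := by
  have h1 : HasDerivAt (fun x : ℝ => (x + 1) ^ s) (1 * s * (x + 1) ^ (s - 1)) x :=
    ((hasDerivAt_id x).add_const 1).rpow_const (Or.inl (by simp only [id]; positivity))
  exact (h1.sub (Real.hasDerivAt_rpow_const (Or.inl hx.ne'))).congr_deriv (by ring)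

lemma alternatingUpTo_rpow_neg_sub (n : ℕ) {p : ℝ} (hp : 0 < p) :
    AlternatingUpTo n (fun x => -((x + 1) ^ (-p) - x ^ (-p))) := by
  have h0 {q : ℝ} (hq : 0 < q) (x : ℝ) (hx : 0 < x) :
      0 ≤ -((x + 1) ^ (-q) - x ^ (-q)) := by
    have := Real.rpow_le_rpow_of_nonpos hx (show x ≤ x + 1 by linarith)
      (show -q ≤ 0 by linarith)
    linarith
  induction n generalizing p with
  | zero => exact h0 hp
  | succ n ih =>
    refine ⟨h0 hp, fun x => p * -((x + 1) ^ (-(p + 1)) - x ^ (-(p + 1))), fun x hx => ?_,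
      (AlternatingUpTo.const n hp.le).mul (ih (by linarith))⟩
    refine (hasDerivAt_rpow_add_one_sub_rpow (-p) hx).neg.congr_deriv ?_
    rw [show -(p + 1) = -p - 1 by ring]
    ring

lemma alternatingUpTo_rpow_sub (n : ℕ) {s : ℝ} (hs0 : 0 < s) (hs1 : s < 1) :
    AlternatingUpTo n (fun x => (x + 1) ^ s - x ^ s) := by
  refine AlternatingUpTo.of_succ ⟨fun x hx => ?_,
    fun x => s * -((x + 1) ^ (-(1 - s)) - x ^ (-(1 - s))), fun x hx => ?_,
    (AlternatingUpTo.const n hs0.le).mul (alternatingUpTo_rpow_neg_sub n (by linarith))⟩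
  · exact sub_nonneg.2 (Real.rpow_le_rpow hx.le (by linarith) hs0.le)
  · refine (hasDerivAt_rpow_add_one_sub_rpow s hx).congr_deriv ?_
    rw [show -(1 - s) = s - 1 by ring]
    ring

theorem ft_completelyMonotone (t : ℝ) (ht : t ∈ Set.Ioo (1:ℝ) 2) :
    CompletelyMonotoneOn
      (fun x : ℝ => 1 / ((x + 1) * Real.sqrt ((x + 1) ^ t - x ^ t)))
      (Set.Ioi 0) := by
  obtain ⟨ht1, ht2⟩ := ht
  intro n x (hx : 0 < x)
  have hpos (y : ℝ) (hy : 0 < y) : 0 < (y + 1) ^ t - y ^ t :=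
    sub_pos.2 (Real.rpow_lt_rpow hy.le (by linarith) (by linarith))
  have hinv : AlternatingUpTo n (fun y : ℝ => (y + 1) ^ (-1 : ℝ)) :=
    AlternatingUpTo.rpow_neg (φ := fun y => y + 1) (φ' := fun _ => 1)
      (fun y hy => by linarith)
      (fun y _ => (hasDerivAt_id y).add_const 1) (AlternatingUpTo.const n zero_le_one) one_pos
  have hsqrt : AlternatingUpTo n (fun y : ℝ => ((y + 1) ^ t - y ^ t) ^ (-(1 / 2) : ℝ)) :=
    AlternatingUpTo.rpow_neg hpos (fun y hy => hasDerivAt_rpow_add_one_sub_rpow t hy)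
      ((AlternatingUpTo.const n (by linarith)).mul
        (alternatingUpTo_rpow_sub n (by linarith) (by linarith))) (by norm_num)
  have heq : (fun y : ℝ => 1 / ((y + 1) * Real.sqrt ((y + 1) ^ t - y ^ t))) =ᶠ[nhds x]
      fun y => (y + 1) ^ (-1 : ℝ) * ((y + 1) ^ t - y ^ t) ^ (-(1 / 2) : ℝ) := by
    filter_upwards [lt_mem_nhds hx] with y hy
    rw [Real.rpow_neg (hpos y hy).le, ← Real.sqrt_eq_rpow, Real.rpow_neg_one, one_div, mul_inv]
  rw [heq.iteratedDeriv_eq]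
  exact (hinv.mul hsqrt).iteratedDeriv_nonneg hx
end

section
/- For t > 2, the function z ↦ (1+z)^t − 1 (principal branch) has at least two zeros in ℂ∖(−∞,0], namely (1+z)^t = 1 has solutions z = e^{±2πi/t} − 1 with nonzero imaginary part; consequently 1/((x+1)√((x+1)^t−1)) is not hyperbolically completely monotone. -/
/-- `f` is hyperbolically completely monotone: for every `u > 0`, the function
`v ↦ f(uv) f(u/v)` is a completely monotone function of `w = v + 1/v` on `[2, ∞)`. -/
def HCM (f : ℝ → ℝ) : Prop :=
  ∀ u : ℝ, 0 < u → ∃ H : ℝ → ℝ, CompletelyMonotoneOn H (Set.Ici 2) ∧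
    ∀ v : ℝ, 0 < v → f (u * v) * f (u / v) = H (v + 1 / v)

open Complex Metric Set Filter Topology

theorem eq_or_eq_inv_of_add_inv_eq {v v' : ℂ} (hv : v ≠ 0) (hv' : v' ≠ 0)
    (h : v + v⁻¹ = v' + v'⁻¹) : v' = v ∨ v' = v⁻¹ := by
  have : (v' - v) * (v * v' - 1) = 0 := by
    field_simp at h
    linear_combination -h
  rcases mul_eq_zero.1 this with h | h
  · exact Or.inl (sub_eq_zero.1 h)
  · exact Or.inr (eq_inv_of_mul_eq_one_right (sub_eq_zero.1 h))

theorem half_add_inv {w s : ℂ} (hs : s ^ 2 = w ^ 2 - 4) :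
    (w + s) / 2 ≠ 0 ∧ (w + s) / 2 + ((w + s) / 2)⁻¹ = w := by
  have h : (w + s) / 2 * ((w - s) / 2) = 1 := by linear_combination -hs / 4
  refine ⟨left_ne_zero_of_mul_eq_one h, ?_⟩
  rw [← eq_inv_of_mul_eq_one_right h]
  ring

theorem mem_slitPlane_of_add_inv {v : ℂ} (hv : v ≠ 0) (h : v + v⁻¹ + 2 ∈ slitPlane) :
    v ∈ slitPlane := by
  by_contra hn
  simp only [mem_slitPlane_iff, not_or, not_lt, not_not] at hn
  have hre : v = (v.re : ℂ) := Complex.ext rfl (by simpa using hn.2)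
  have hneg : v.re < 0 := lt_of_le_of_ne hn.1 fun h0 => hv (by rw [hre, h0]; simp)
  rw [hre, ← ofReal_inv, ← ofReal_add, ← ofReal_ofNat, ← ofReal_add, ofReal_mem_slitPlane] at h
  have : v.re + v.re⁻¹ + 2 = (v.re + 1) ^ 2 / v.re := by
    have := hneg.ne
    field_simp
    ring
  rw [this] at h
  exact absurd h (not_lt.2 (div_nonpos_of_nonneg_of_nonpos (sq_nonneg _) hneg.le))

theorem inv_mem_slitPlane {v : ℂ} (hv : v ∈ slitPlane) : v⁻¹ ∈ slitPlane := by
  have h0 : 0 < normSq v := normSq_pos.2 (slitPlane_ne_zero hv)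
  rw [mem_slitPlane_iff] at hv ⊢
  rw [inv_re, inv_im]
  rcases hv with h | h
  · exact Or.inl (div_pos h h0)
  · exact Or.inr (div_ne_zero (neg_ne_zero.2 h) h0.ne')

/-- The pullback of `Q` under a right inverse of `v ↦ v + v⁻¹`. -/
noncomputable def joukowskiPullback (Q : ℂ → ℂ) (w : ℂ) : ℂ :=
  Q ((w + (w - 2) ^ (1 / 2 : ℂ) * (w + 2) ^ (1 / 2 : ℂ)) / 2)

theorem cpow_half_sq (z : ℂ) : (z ^ (1 / 2 : ℂ)) ^ 2 = z := by
  simp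

theorem sq_cpow_half_mul (w : ℂ) :
    ((w - 2) ^ (1 / 2 : ℂ) * (w + 2) ^ (1 / 2 : ℂ)) ^ 2 = w ^ 2 - 4 := by
  rw [mul_pow, cpow_half_sq, cpow_half_sq]
  ring

theorem joukowskiPullback_eq {Q : ℂ → ℂ} (hQ : ∀ v, Q v⁻¹ = Q v) {v w : ℂ} (hv : v ≠ 0)
    (hw : v + v⁻¹ = w) : joukowskiPullback Q w = Q v := by
  obtain ⟨h0, h1⟩ := half_add_inv (sq_cpow_half_mul w)
  unfold joukowskiPullback
  rcases eq_or_eq_inv_of_add_inv_eq hv h0 (hw.trans h1.symm) with h | h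
  · rw [h]
  · rw [h, hQ]

theorem differentiableOn_joukowskiPullback {Q : ℂ → ℂ} (hQ : ∀ v, Q v⁻¹ = Q v)
    (hd : DifferentiableOn ℂ Q slitPlane) :
    DifferentiableOn ℂ (joukowskiPullback Q) {w | w + 2 ∈ slitPlane} := by
  have hopen : IsOpen {w : ℂ | w + 2 ∈ slitPlane} :=
    isOpen_slitPlane.preimage (continuous_id.add continuous_const)
  have hQd : ∀ v ∈ slitPlane, DifferentiableAt ℂ Q v := fun v hv =>
    hd.differentiableAt (isOpen_slitPlane.mem_nhds hv)
  have hmem : ∀ w s : ℂ, s ^ 2 = w ^ 2 - 4 → w + 2 ∈ slitPlane → (w + s) / 2 ∈ slitPlane := by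
    intro w s hs hw
    obtain ⟨h0, h1⟩ := half_add_inv hs
    exact mem_slitPlane_of_add_inv h0 (by rwa [h1])
  have h22 : (2 : ℂ) + 2 ∈ slitPlane := Or.inl (by norm_num)
  have h2 : {w : ℂ | w + 2 ∈ slitPlane} ∈ 𝓝 (2 : ℂ) := hopen.mem_nhds h22
  refine (differentiableOn_compl_singleton_and_continuousAt_iff h2).1 ⟨?_, ?_⟩
  · rintro w ⟨hw, hw2⟩
    apply DifferentiableAt.differentiableWithinAt
    rcases mem_slitPlane_or_neg_mem_slitPlane (sub_ne_zero.2 hw2) with h | h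
    · refine DifferentiableAt.comp w (hQd _ (hmem w _ (sq_cpow_half_mul w) hw)) ?_
      exact ((differentiableAt_id.add (((differentiableAt_id.sub_const 2).cpow
        (differentiableAt_const _) h).mul ((differentiableAt_id.add_const 2).cpow
        (differentiableAt_const _) hw))).div_const 2)
    · have hsq' : ∀ z : ℂ, (I * ((-(z - 2)) ^ (1 / 2 : ℂ) * (z + 2) ^ (1 / 2 : ℂ))) ^ 2
          = z ^ 2 - 4 := by
        intro z
        rw [mul_pow, mul_pow, cpow_half_sq, cpow_half_sq, I_sq]
        ring
      have heq : joukowskiPullback Q = fun z =>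
          Q ((z + I * ((-(z - 2)) ^ (1 / 2 : ℂ) * (z + 2) ^ (1 / 2 : ℂ))) / 2) := by
        funext z
        obtain ⟨h0, h1⟩ := half_add_inv (hsq' z)
        exact joukowskiPullback_eq hQ h0 h1
      rw [heq]
      refine DifferentiableAt.comp (g := Q) w (hQd _ (hmem w _ (hsq' w) hw)) ?_
      exact ((differentiableAt_id.add ((((differentiableAt_id.sub_const 2).neg.cpow
        (differentiableAt_const _) h).mul ((differentiableAt_id.add_const 2).cpow
        (differentiableAt_const _) hw)).const_mul I)).div_const 2)
  · have hlim : ContinuousAt (fun w : ℂ => (w - 2) ^ (1 / 2 : ℂ) * (w + 2) ^ (1 / 2 : ℂ)) 2 := by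
      suffices h : Tendsto (fun w : ℂ => (w - 2) ^ (1 / 2 : ℂ) * (w + 2) ^ (1 / 2 : ℂ))
          (𝓝 2) (𝓝 0) by simpa [ContinuousAt] using h
      rw [tendsto_zero_iff_norm_tendsto_zero]
      have hc : ContinuousAt (fun w : ℂ => √‖w ^ 2 - 4‖) 2 := by fun_prop
      have h0 : √‖(2 : ℂ) ^ 2 - 4‖ = 0 := by norm_num
      rw [ContinuousAt, h0] at hc
      refine hc.congr fun w => ?_
      rw [← sq_cpow_half_mul, norm_pow, Real.sqrt_sq (norm_nonneg _)]
    have hc : ContinuousAt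
        (fun w : ℂ => (w + (w - 2) ^ (1 / 2 : ℂ) * (w + 2) ^ (1 / 2 : ℂ)) / 2) 2 :=
      (continuousAt_id.add hlim).div_const 2
    exact ContinuousAt.comp (g := Q) (hQd _ (hmem 2 _ (sq_cpow_half_mul 2) h22)).continuousAt hc

theorem norm_le_of_alternating_iteratedDeriv {f : ℂ → ℂ} {c R : ℝ} {b : ℕ → ℝ}
    (hf : DifferentiableOn ℂ f (ball (c : ℂ) R)) (hb : ∀ n, 0 ≤ (-1) ^ n * b n)
    (hfb : ∀ n, iteratedDeriv n f c = b n) {w : ℂ} (hw : w ∈ ball (c : ℂ) R) :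
    ‖f w‖ ≤ ‖f ((c - ‖w - c‖ : ℝ) : ℂ)‖ := by
  have hw' : ((c - ‖w - c‖ : ℝ) : ℂ) ∈ ball (c : ℂ) R := by
    rw [mem_ball, dist_eq] at hw ⊢
    rw [← ofReal_sub, norm_real, Real.norm_eq_abs]
    simpa using hw
  have h1 := hasSum_taylorSeries_on_ball hf hw
  have h2 := hasSum_re (hasSum_taylorSeries_on_ball hf hw')
  refine (h1.norm_le_of_bounded h2 fun n => ?_).trans (re_le_norm _)
  rw [hfb]
  have : (((n.factorial : ℂ))⁻¹ • (((c - ‖w - c‖ : ℝ) : ℂ) - c) ^ n • (b n : ℂ))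
      = (((n.factorial : ℝ)⁻¹ * (‖w - c‖ ^ n * ((-1) ^ n * b n)) : ℝ) : ℂ) := by
    push_cast
    rw [sub_sub_cancel_left, neg_pow]
    simp only [smul_eq_mul]
    ring
  rw [this, ofReal_re, norm_smul, norm_smul, norm_pow, norm_inv, norm_natCast, norm_real,
    Real.norm_eq_abs]
  have hab : |b n| = (-1) ^ n * b n := by
    rw [← abs_of_nonneg (hb n), abs_mul, abs_pow, abs_neg, abs_one, one_pow, one_mul]
  rw [hab]

theorem iteratedDeriv_ofReal {f : ℂ → ℂ} {g : ℝ → ℝ} {s : Set ℝ} (hs : IsOpen s)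
    (hf : ∀ x ∈ s, AnalyticAt ℂ f x) (hfg : ∀ x ∈ s, f x = g x) (n : ℕ) :
    ∀ x ∈ s, iteratedDeriv n f x = ((iteratedDeriv n g x : ℝ) : ℂ) := by
  induction n with
  | zero => simpa using hfg
  | succ n ih =>
    intro x hx
    have hd : HasDerivAt (iteratedDeriv n f) (iteratedDeriv (n + 1) f x) x := by
      rw [iteratedDeriv_succ, hasDerivAt_deriv_iff, iteratedDeriv_eq_iterate]
      exact ((hf x hx).iterated_deriv n).differentiableAt
    have hev : ∀ᶠ y : ℝ in 𝓝 x, ((iteratedDeriv n g y : ℝ) : ℂ) = iteratedDeriv n f y := by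
      filter_upwards [hs.mem_nhds hx] with y hy using (ih y hy).symm
    have hg : HasDerivAt (iteratedDeriv n g) (iteratedDeriv (n + 1) f x).re x :=
      hd.real_of_complex.congr_of_eventuallyEq (hev.mono fun y hy => by simp [← hy])
    rw [iteratedDeriv_succ (f := g), hg.deriv]
    exact hd.comp_ofReal.unique (hg.ofReal_comp.congr_of_eventuallyEq (hev.mono fun y hy => hy.symm))

theorem CompletelyMonotoneOn.mul {f g : ℝ → ℝ} {s : Set ℝ} (hf : CompletelyMonotoneOn f s)
    (hg : CompletelyMonotoneOn g s) (hfd : ∀ n : ℕ, ∀ x ∈ s, ContDiffAt ℝ n f x)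
    (hgd : ∀ n : ℕ, ∀ x ∈ s, ContDiffAt ℝ n g x) : CompletelyMonotoneOn (f * g) s := by
  intro n x hx
  rw [iteratedDeriv_mul (hfd n x hx) (hgd n x hx), Finset.mul_sum]
  refine Finset.sum_nonneg fun i hi => ?_
  have hin : i + (n - i) = n := by
    have := Finset.mem_range.1 hi
    lia
  have : (-1 : ℝ) ^ n * (n.choose i * iteratedDeriv i f x * iteratedDeriv (n - i) g x) =
      n.choose i * (((-1) ^ i * iteratedDeriv i f x) *
        ((-1) ^ (n - i) * iteratedDeriv (n - i) g x)) := by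
    nth_rewrite 1 [← hin]
    rw [pow_add]
    ring
  rw [this]
  exact mul_nonneg (Nat.cast_nonneg _) (mul_nonneg (hf i x hx) (hg (n - i) x hx))

theorem CompletelyMonotoneOn.ne_zero_of_sq_mul_eq_one {H : ℝ → ℝ} {D : ℂ → ℂ}
    (hH : CompletelyMonotoneOn H (Ici 2)) (hD : DifferentiableOn ℂ D {w | w + 2 ∈ slitPlane})
    (hD0 : ∀ x : ℝ, -2 < x → D x ≠ 0) (hHD : ∀ x : ℝ, 2 < x → (H x : ℂ) ^ 2 * D x = 1)
    {w : ℂ} (hw : -2 < w.re) : D w ≠ 0 := by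
  intro hDw
  set Ω : Set ℂ := {w | w + 2 ∈ slitPlane} with hΩ
  have hΩo : IsOpen Ω := isOpen_slitPlane.preimage (continuous_id.add continuous_const)
  have hreal : ∀ x : ℝ, -2 < x → (x : ℂ) ∈ Ω := fun x hx => Or.inl (by simp; linarith)
  set U : Set ℂ := Ω ∩ D ⁻¹' {0}ᶜ with hU
  have hUo : IsOpen U := hD.continuousOn.isOpen_inter_preimage hΩo isOpen_compl_singleton
  have hrealU : ∀ x : ℝ, -2 < x → (x : ℂ) ∈ U := fun x hx => ⟨hreal x hx, hD0 x hx⟩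
  have hK : DifferentiableOn ℂ (fun z => (D z)⁻¹) U :=
    (hD.mono inter_subset_left).inv fun z hz => hz.2
  have hKan : ∀ x ∈ Ioi (2 : ℝ), AnalyticAt ℂ (fun z => (D z)⁻¹) x := fun x hx =>
    hK.analyticAt (hUo.mem_nhds (hrealU x (by linarith [mem_Ioi.1 hx])))
  have hKH : ∀ x ∈ Ioi (2 : ℝ), (D x)⁻¹ = ((H * H) x : ℝ) := fun x hx => by
    rw [← eq_inv_of_mul_eq_one_left (hHD x hx)]
    simp [sq]
  have hHI : CompletelyMonotoneOn H (Ioi 2) := fun n x hx => hH n x (Ioi_subset_Ici_self hx)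
  have hHd : ∀ n : ℕ, ∀ x ∈ Ioi (2 : ℝ), ContDiffAt ℝ n H x := by
    intro n x hx
    have h1 : ContDiffAt ℝ n (fun y : ℝ => ((D y)⁻¹).re) x :=
      (hKan x hx).contDiffAt.real_of_complex
    have hne : ((D x)⁻¹).re ≠ 0 := by
      intro h0
      have := hKH x hx
      have h2 : (D x)⁻¹ = 0 := by
        rw [this] at h0 ⊢
        rw [ofReal_re] at h0
        rw [h0, ofReal_zero]
      exact hD0 x (by linarith [mem_Ioi.1 hx]) (inv_eq_zero.1 h2)
    refine (h1.sqrt hne).congr_of_eventuallyEq ?_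
    filter_upwards [isOpen_Ioi.mem_nhds hx] with y hy
    rw [hKH y hy, ofReal_re, Pi.mul_apply, Real.sqrt_mul_self]
    simpa using hHI 0 y hy
  obtain ⟨c, hc2, hc⟩ : ∃ c : ℝ, 2 < c ∧ dist (c : ℂ) w < c + 2 := by
    have hpos : 0 < w.re + 2 := by linarith
    refine ⟨max 3 ((w.re ^ 2 + w.im ^ 2) / (w.re + 2)), lt_max_of_lt_left (by norm_num), ?_⟩
    set c := max 3 ((w.re ^ 2 + w.im ^ 2) / (w.re + 2)) with hcdef
    have h3 : 3 ≤ c := le_max_left _ _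
    have h4 : w.re ^ 2 + w.im ^ 2 ≤ c * (w.re + 2) := (div_le_iff₀ hpos).1 (le_max_right _ _)
    refine lt_of_pow_lt_pow_left₀ 2 (by linarith) ?_
    rw [dist_eq, ← normSq_eq_norm_sq, normSq_apply]
    simp only [sub_re, ofReal_re, sub_im, ofReal_im]
    nlinarith
  obtain ⟨z, hzU, hzR⟩ := hUo.isClosed_compl.exists_infDist_eq_dist ⟨w, fun h => h.2 hDw⟩ (c : ℂ)
  set R := infDist (c : ℂ) Uᶜ with hR
  have hRc : R < c + 2 := (infDist_le_dist_of_mem fun h => h.2 hDw).trans_lt hc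
  have hball : ball (c : ℂ) R ⊆ U := fun y hy => by
    by_contra hyU
    rw [mem_ball, dist_comm] at hy
    exact (infDist_le_dist_of_mem hyU).not_gt hy
  have hzΩ : z ∈ Ω := by
    by_contra hn
    simp only [hΩ, mem_ofPred_eq, mem_slitPlane_iff, not_or, not_lt, not_not] at hn
    have h1 := abs_re_le_norm ((c : ℂ) - z)
    rw [← dist_eq, ← hzR, sub_re, ofReal_re] at h1
    have h2 : z.re + 2 ≤ 0 := by simpa using hn.1
    linarith [le_abs_self (c - z.re)]
  have hDz : D z = 0 := by
    by_contra hn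
    exact hzU ⟨hzΩ, hn⟩
  have hRpos : 0 < R := by
    rw [hzR, dist_pos]
    rintro rfl
    exact hD0 c (by linarith) hDz
  have hbound : ∀ r ∈ Ioo (0 : ℝ) 1, ‖D ((c - r * R : ℝ) : ℂ)‖ ≤ ‖D (c + r * (z - c))‖ := by
    intro r hr
    have hn : ‖(c + r * (z - c) : ℂ) - c‖ = r * R := by
      rw [add_sub_cancel_left, norm_mul, norm_real, Real.norm_of_nonneg hr.1.le, hzR, dist_comm,
        dist_eq]
    have hm : (c + r * (z - c) : ℂ) ∈ ball (c : ℂ) R := by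
      rw [mem_ball, dist_eq, hn]
      nlinarith [hr.2]
    have h := norm_le_of_alternating_iteratedDeriv (hK.mono hball)
      (fun n => hHI.mul hHI hHd hHd n c hc2)
      (fun n => iteratedDeriv_ofReal isOpen_Ioi hKan hKH n c hc2) hm
    rw [hn, norm_inv, norm_inv] at h
    refine (inv_le_inv₀ (norm_pos_iff.2 (hball hm).2) (norm_pos_iff.2 ?_)).1 h
    exact hD0 _ (by nlinarith [hr.2])
  have hDc : ∀ y ∈ Ω, ContinuousAt D y := fun y hy =>
    (hD.differentiableAt (hΩo.mem_nhds hy)).continuousAt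
  have hlim1 : ContinuousAt (fun r : ℝ => ‖D ((c - r * R : ℝ) : ℂ)‖) 1 := by
    refine (ContinuousAt.comp (g := D) (f := fun r : ℝ => ((c - r * R : ℝ) : ℂ))
      (hDc _ (hreal _ (by linarith))) (by fun_prop)).norm
  have hlim2 : ContinuousAt (fun r : ℝ => ‖D (c + r * (z - c))‖) 1 := by
    refine (ContinuousAt.comp (g := D) (f := fun r : ℝ => (c + r * (z - c) : ℂ))
      (hDc _ (by simpa using hzΩ)) (by fun_prop)).norm
  have hle := le_of_tendsto_of_tendsto (hlim1.tendsto.mono_left nhdsWithin_le_nhds)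
    (hlim2.tendsto.mono_left nhdsWithin_le_nhds)
    (Filter.eventually_of_mem (Ioo_mem_nhdsLT zero_lt_one) hbound)
  simp only [ofReal_one, one_mul, add_sub_cancel, hDz, norm_zero] at hle
  exact hD0 _ (by linarith) (norm_le_zero_iff.1 hle)

theorem exists_add_inv_eq (w : ℂ) : ∃ v : ℂ, v ≠ 0 ∧ v + v⁻¹ = w :=
  ⟨_, half_add_inv (s := (w ^ 2 - 4) ^ (1 / 2 : ℂ)) (by simp)⟩

theorem im_eq_zero_or_norm_eq_one_of_add_inv {v : ℂ} {x : ℝ} (hv : v ≠ 0) (h : v + v⁻¹ = x) :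
    v.im = 0 ∨ ‖v‖ = 1 := by
  have h0 : normSq v ≠ 0 := (normSq_pos.2 hv).ne'
  have him : v.im + -v.im / normSq v = 0 := by simpa using congrArg im h
  field_simp at him
  rcases mul_eq_zero.1 (show v.im * (normSq v - 1) = 0 by linear_combination him) with h1 | h1
  · exact Or.inl h1
  · right
    rw [normSq_eq_norm_sq, sub_eq_zero] at h1
    exact (pow_eq_one_iff_of_nonneg (norm_nonneg v) two_ne_zero).1 h1

/-- If `f` is hyperbolically completely monotone, `f² g = 1` on `(0, ∞)` and `g` has no zero on
the part of the circle of radius `u` in the slit plane, then `v ↦ g (u v)` has no zero with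
`-2 < re (v + v⁻¹)`. -/
theorem HCM.apply_mul_ne_zero {f : ℝ → ℝ} {g : ℂ → ℂ} (hf : HCM f)
    (hg : DifferentiableOn ℂ g slitPlane) (hfg : ∀ x : ℝ, 0 < x → (f x : ℂ) ^ 2 * g x = 1)
    {u : ℝ} (hu : 0 < u) (hgu : ∀ z ∈ slitPlane, ‖z‖ = u → g z ≠ 0)
    {v : ℂ} (hv : v ∈ slitPlane) (hre : -2 < (v + v⁻¹).re) : g (u * v) ≠ 0 := by
  obtain ⟨H, hH, hHf⟩ := hf u hu
  set Q : ℂ → ℂ := fun v => g (u * v) * g (u * v⁻¹) with hQdef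
  have hQ : ∀ v, Q v⁻¹ = Q v := fun v => by simp only [hQdef, inv_inv, mul_comm]
  have hmul : ∀ v ∈ slitPlane, (u : ℂ) * v ∈ slitPlane := by
    intro v hv
    rw [mem_slitPlane_iff] at hv ⊢
    rw [re_ofReal_mul, im_ofReal_mul]
    exact hv.imp (mul_pos hu) (mul_ne_zero hu.ne')
  have hpos : ∀ x : ℝ, 0 < x → g x ≠ 0 := fun x hx => right_ne_zero_of_mul_eq_one (hfg x hx)
  have hQd : DifferentiableOn ℂ Q slitPlane := by
    refine (hg.comp (differentiableOn_id.const_mul _) hmul).mul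
      (hg.comp ((differentiableOn_id.inv fun v hv => slitPlane_ne_zero hv).const_mul _) ?_)
    exact fun v hv => hmul _ (inv_mem_slitPlane hv)
  have hne := hH.ne_zero_of_sq_mul_eq_one (differentiableOn_joukowskiPullback hQ hQd) ?_ ?_ hre
  · rw [joukowskiPullback_eq hQ (slitPlane_ne_zero hv) rfl] at hne
    exact left_ne_zero_of_mul hne
  · intro x hx
    obtain ⟨v, hv0, hvx⟩ := exists_add_inv_eq x
    have hvs : v ∈ slitPlane := mem_slitPlane_of_add_inv hv0 (by
      rw [hvx]
      exact Or.inl (by simp; linarith))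
    rw [joukowskiPullback_eq hQ hv0 hvx]
    rcases im_eq_zero_or_norm_eq_one_of_add_inv hv0 hvx with h | h
    · lift v to ℝ using h
      have hvp := ofReal_mem_slitPlane.1 hvs
      have h1 := hpos (u * v) (by positivity)
      have h2 := hpos (u * v⁻¹) (by positivity)
      push_cast at h1 h2
      exact mul_ne_zero h1 h2
    · refine mul_ne_zero (hgu _ (hmul _ hvs) ?_) (hgu _ (hmul _ (inv_mem_slitPlane hvs)) ?_) <;>
        simp [h, hu.le]
  · intro x hx
    have hs : √(x ^ 2 - 4) ^ 2 = x ^ 2 - 4 := Real.sq_sqrt (by nlinarith)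
    set v : ℝ := (x + √(x ^ 2 - 4)) / 2 with hvdef
    have hvp : 0 < v := by positivity
    have hvx : v + v⁻¹ = x := by
      have hmul1 : v * ((x - √(x ^ 2 - 4)) / 2) = 1 := by rw [hvdef]; linear_combination -hs / 4
      rw [← eq_inv_of_mul_eq_one_right hmul1, hvdef]
      ring
    rw [joukowskiPullback_eq hQ (v := v) (ofReal_ne_zero.2 hvp.ne') (by rw [← hvx]; push_cast; rfl)]
    rw [← hvx, ← one_div, ← hHf v hvp]
    have h1 := hfg (u * v) (by positivity)
    have h2 := hfg (u / v) (by positivity)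
    simp only [hQdef]
    rw [div_eq_mul_inv] at h2 ⊢
    push_cast at h1 h2 ⊢
    rw [← one_mul (1 : ℂ)]
    nth_rewrite 1 [← h1]
    rw [← h2]
    ring

theorem le_norm_sq_of_one_add_cpow_eq_one {t : ℝ} (ht : 2 < t) {z : ℂ} (hz : z ∈ slitPlane)
    (h : (1 + z) ^ (t : ℂ) = 1) : 2 * (1 - Real.cos (2 * Real.pi / t)) ≤ ‖z‖ ^ 2 := by
  have ht0 : 0 < t := by linarith
  have hne : 1 + z ≠ 0 := by
    intro h0
    rw [eq_neg_of_add_eq_zero_right h0] at hz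
    simp [mem_slitPlane_iff] at hz
    linarith
  have hnorm : ‖1 + z‖ = 1 := by
    have h1 := norm_cpow_real (1 + z) t
    rw [h, norm_one] at h1
    exact (Real.rpow_left_inj (norm_nonneg _) zero_le_one ht0.ne').1 (by rw [← h1, Real.one_rpow])
  have harg : 2 * Real.pi / t ≤ |arg (1 + z)| := by
    rw [cpow_def_of_ne_zero hne, exp_eq_one_iff] at h
    obtain ⟨n, hn⟩ := h
    have him : arg (1 + z) * t = n * (2 * Real.pi) := by simpa [log_im] using congrArg im hn
    have hn0 : n ≠ 0 := by
      rintro rfl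
      have h0 : arg (1 + z) = 0 := by simpa [ht0.ne'] using him
      have h1 := norm_mul_exp_arg_mul_I (1 + z)
      rw [hnorm, h0] at h1
      simp at h1
      exact slitPlane_ne_zero hz h1
    have hn1 : (1 : ℝ) ≤ |(n : ℝ)| := by exact_mod_cast Int.one_le_abs hn0
    have habs := congrArg abs him
    rw [abs_mul, abs_mul, abs_of_pos ht0, abs_of_pos Real.two_pi_pos] at habs
    rw [div_le_iff₀ ht0, habs]
    nlinarith [Real.two_pi_pos]
  have hcos := Real.cos_le_cos_of_nonneg_of_le_pi (by positivity) (abs_arg_le_pi (1 + z)) harg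
  rw [Real.cos_abs, cos_arg hne, hnorm, div_one] at hcos
  have hsq : ‖z‖ ^ 2 = ‖1 + z‖ ^ 2 + 1 - 2 * (1 + z).re := by
    rw [← normSq_eq_norm_sq, ← normSq_eq_norm_sq, normSq_apply, normSq_apply]
    simp
    ring
  rw [hsq, hnorm]
  linarith

theorem zeros_and_not_HCM (t : ℝ) (ht : 2 < t) :
    ((1 + (Complex.exp (2 * Real.pi * Complex.I / t) - 1)) ^ (t : ℂ) = 1 ∧
      (Complex.exp (2 * Real.pi * Complex.I / t) - 1).im ≠ 0) ∧
    ((1 + (Complex.exp (-(2 * Real.pi * Complex.I / t)) - 1)) ^ (t : ℂ) = 1 ∧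
      (Complex.exp (-(2 * Real.pi * Complex.I / t)) - 1).im ≠ 0) ∧
    Complex.exp (2 * Real.pi * Complex.I / t) - 1 ≠
      Complex.exp (-(2 * Real.pi * Complex.I / t)) - 1 ∧
    ¬ HCM (fun x : ℝ => 1 / ((x + 1) * Real.sqrt ((x + 1) ^ t - 1))) := by
  have ht0 : 0 < t := by linarith
  set θ : ℝ := 2 * Real.pi / t with hθ
  have hθ0 : 0 < θ := by positivity
  have hθπ : θ < Real.pi := by
    rw [hθ, div_lt_iff₀ ht0]
    nlinarith [Real.pi_pos]
  have hexp : 2 * Real.pi * Complex.I / t = (θ : ℂ) * I := by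
    rw [hθ]
    push_cast
    ring
  have hexp' : -(2 * Real.pi * Complex.I / t) = ((-θ : ℝ) : ℂ) * I := by
    rw [hexp]
    push_cast
    ring
  have htθ : (t : ℂ) * θ = 2 * Real.pi := by
    rw [hθ]
    push_cast
    exact mul_div_cancel₀ _ (ofReal_ne_zero.2 ht0.ne')
  have hsin : 0 < Real.sin θ := Real.sin_pos_of_pos_of_lt_pi hθ0 hθπ
  have hzero : Complex.exp (θ * I) ^ (t : ℂ) = 1 := by
    rw [cpow_def_of_ne_zero (exp_ne_zero _), log_exp (by simp; linarith) (by simp; linarith),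
      exp_eq_one_iff]
    exact ⟨1, by push_cast; linear_combination I * htθ⟩
  have hzero' : Complex.exp ((-θ : ℝ) * I) ^ (t : ℂ) = 1 := by
    rw [cpow_def_of_ne_zero (exp_ne_zero _), log_exp (by simp; linarith) (by simp; linarith),
      exp_eq_one_iff]
    exact ⟨-1, by push_cast; linear_combination -I * htθ⟩
  have him : (Complex.exp (θ * I) - 1).im = Real.sin θ := by
    rw [sub_im, exp_ofReal_mul_I_im, one_im, sub_zero]
  have him' : (Complex.exp ((-θ : ℝ) * I) - 1).im = -Real.sin θ := by
    rw [sub_im, exp_ofReal_mul_I_im, one_im, sub_zero, Real.sin_neg]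
  rw [hexp', hexp, add_sub_cancel, add_sub_cancel]
  refine ⟨⟨hzero, by rw [him]; exact hsin.ne'⟩, ⟨hzero', by rw [him']; linarith⟩, ?_, ?_⟩
  · intro h
    have := congrArg im h
    rw [him, him'] at this
    linarith
  intro hf
  set u : ℝ := 1 - Real.cos θ with hu
  have hcos1 : -1 < Real.cos θ := by
    simpa using Real.cos_lt_cos_of_nonneg_of_le_pi hθ0.le le_rfl hθπ
  have hcos2 : Real.cos θ < 1 := by
    simpa using Real.cos_lt_cos_of_nonneg_of_le_pi le_rfl hθπ.le hθ0
  have hu0 : 0 < u := by linarith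
  have hu2 : u < 2 := by linarith
  set z : ℂ := Complex.exp (θ * I) - 1 with hz
  have hzs : z ∈ slitPlane := Or.inr (by rw [him]; exact hsin.ne')
  have hzre : z.re = -u := by
    rw [hz, sub_re, exp_ofReal_mul_I_re, one_re]
    ring
  have hznorm : normSq z = 2 * u := by
    rw [normSq_apply, hzre, him]
    nlinarith [Real.sin_sq_add_cos_sq θ]
  have hslit : ∀ w ∈ slitPlane, 1 + w ∈ slitPlane := by
    intro w hw
    rw [mem_slitPlane_iff] at hw ⊢
    rw [add_re, add_im, one_re, one_im, zero_add]
    exact hw.imp_left fun h => by linarith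
  have hv : z / u ∈ slitPlane := by
    rw [mem_slitPlane_iff, div_ofReal_im]
    exact Or.inr (div_ne_zero (by rw [him]; exact hsin.ne') hu0.ne')
  refine hf.apply_mul_ne_zero (g := fun w => (1 + w) ^ 2 * ((1 + w) ^ (t : ℂ) - 1))
    ?_ ?_ hu0 ?_ hv ?_ ?_
  · intro w hw
    have h1 : DifferentiableAt ℂ (fun w : ℂ => 1 + w) w := by fun_prop
    exact ((h1.pow 2).mul ((h1.cpow (differentiableAt_const _) (hslit w hw)).sub_const
      1)).differentiableWithinAt
  · intro x hx
    have h1 : 1 < (x + 1) ^ t := Real.one_lt_rpow (by linarith) ht0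
    have h2 : (1 + (x : ℂ)) ^ (t : ℂ) = (((x + 1) ^ t : ℝ) : ℂ) := by
      rw [ofReal_cpow (by linarith), ofReal_add, ofReal_one, add_comm]
    rw [h2]
    norm_cast
    rw [div_pow, mul_pow, Real.sq_sqrt (by linarith), one_pow, add_comm 1 x, one_div]
    exact inv_mul_cancel₀ (by
      have : 0 < (x + 1) ^ t - 1 := by linarith
      positivity)
  · intro w hw hwu h0
    rcases mul_eq_zero.1 h0 with h | h
    · exact slitPlane_ne_zero (hslit w hw) (pow_eq_zero_iff two_ne_zero |>.1 h)
    · have := le_norm_sq_of_one_add_cpow_eq_one ht hw (sub_eq_zero.1 h)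
      rw [hwu] at this
      nlinarith
  · rw [inv_div, add_re, div_ofReal_re, hzre, div_eq_mul_inv (u : ℂ), re_ofReal_mul, inv_re, hzre,
      hznorm]
    have : -u / u + u * (-u / (2 * u)) = -1 - u / 2 := by
      field_simp
      ring
    rw [this]
    linarith
  · rw [mul_div_cancel₀ _ (ofReal_ne_zero.2 hu0.ne')]
    simp [hz, hzero]
end

section
/- The function m_α(u) = 1/(u^{2α} + 2cos(πα)u^α + 1) on (0,∞) is hyperbolically completely monotone if and only if |α| ≤ 1/2. -/
open Set Filter Topology

/-- The larger root `v ≥ 1` of `v + 1 / v = w`, for `w ≥ 2`. -/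
noncomputable def joukowskyInv (w : ℝ) : ℝ := (w + √(w ^ 2 - 4)) / 2

/-- The function `v ^ β + v ^ (-β)`, expressed in the variable `w = v + 1 / v`. -/
noncomputable def powSum (β w : ℝ) : ℝ := joukowskyInv w ^ β + joukowskyInv w ^ (-β)

/-- The successive derivatives of `powSum β` on `(2, ∞)`, computed recursively from the differential
equation `(w ^ 2 - 4) * y'' + w * y' - β ^ 2 * y = 0`. -/
noncomputable def powSumDeriv (β : ℝ) : ℕ → ℝ → ℝ
  | 0, w => powSum β w
  | 1, w => β * (joukowskyInv w ^ β - joukowskyInv w ^ (-β)) / √(w ^ 2 - 4)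
  | n + 2, w => -((2 * n + 1) * w * powSumDeriv β (n + 1) w +
      ((n : ℝ) ^ 2 - β ^ 2) * powSumDeriv β n w) / (w ^ 2 - 4)

lemma sq_sub_four_pos {w : ℝ} (hw : 2 < w) : 0 < w ^ 2 - 4 := by nlinarith

lemma joukowskyInv_pos {w : ℝ} (hw : 2 ≤ w) : 0 < joukowskyInv w := by
  have := Real.sqrt_nonneg (w ^ 2 - 4)
  unfold joukowskyInv
  linarith

lemma one_lt_joukowskyInv {w : ℝ} (hw : 2 < w) : 1 < joukowskyInv w := by
  have := Real.sqrt_nonneg (w ^ 2 - 4)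
  unfold joukowskyInv
  linarith

lemma joukowskyInv_add_one_div {v : ℝ} (hv : 0 < v) :
    joukowskyInv (v + 1 / v) = v ∨ joukowskyInv (v + 1 / v) = v⁻¹ := by
  have h : (v + 1 / v) ^ 2 - 4 = (v - 1 / v) ^ 2 := by field_simp; ring
  unfold joukowskyInv
  rw [h, Real.sqrt_sq_eq_abs]
  rcases abs_choice (v - 1 / v) with h | h <;> rw [h]
  · left; ring
  · right; ring

lemma add_one_div_joukowskyInv {w : ℝ} (hw : 2 ≤ w) :
    joukowskyInv w + 1 / joukowskyInv w = w := by
  have h := (joukowskyInv_pos hw).ne'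
  have h2 : √(w ^ 2 - 4) ^ 2 = w ^ 2 - 4 := Real.sq_sqrt (by nlinarith)
  field_simp
  unfold joukowskyInv
  linear_combination h2 / 4

lemma two_le_add_one_div {v : ℝ} (hv : 0 < v) : 2 ≤ v + 1 / v := by
  have h : v + 1 / v - 2 = (v - 1) ^ 2 / v := by field_simp; ring
  have : 0 ≤ (v - 1) ^ 2 / v := by positivity
  linarith

lemma powSum_add_one_div (β : ℝ) {v : ℝ} (hv : 0 < v) :
    powSum β (v + 1 / v) = v ^ β + (v ^ β)⁻¹ := by
  unfold powSum
  rcases joukowskyInv_add_one_div hv with h | h <;> rw [h]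
  · rw [Real.rpow_neg hv.le]
  · rw [Real.rpow_neg (inv_pos.2 hv).le, Real.inv_rpow hv.le, inv_inv, add_comm]

lemma two_le_powSum (β : ℝ) {w : ℝ} (hw : 2 ≤ w) : 2 ≤ powSum β w := by
  have h := joukowskyInv_pos hw
  have h1 : 0 < joukowskyInv w ^ β := Real.rpow_pos_of_pos h _
  unfold powSum
  rw [Real.rpow_neg h.le, ← one_div]
  exact two_le_add_one_div h1

lemma powSum_sq (β : ℝ) {w : ℝ} (hw : 2 ≤ w) : powSum β w ^ 2 = powSum (2 * β) w + 2 := by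
  have h := joukowskyInv_pos hw
  have h1 : 0 < joukowskyInv w ^ β := Real.rpow_pos_of_pos h _
  unfold powSum
  rw [Real.rpow_neg h.le, Real.rpow_neg h.le, mul_comm 2 β, Real.rpow_mul h.le, Real.rpow_two]
  field_simp
  ring

lemma hasDerivAt_sqrt_sq_sub_four {w : ℝ} (hw : 2 < w) :
    HasDerivAt (fun x : ℝ => √(x ^ 2 - 4)) (w / √(w ^ 2 - 4)) w := by
  have h := (((hasDerivAt_id' w).fun_pow 2).sub_const 4).sqrt (sq_sub_four_pos hw).ne'
  refine h.congr_deriv ?_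
  have hr : 0 < √(w ^ 2 - 4) := Real.sqrt_pos.2 (sq_sub_four_pos hw)
  field_simp
  norm_num

lemma hasDerivAt_joukowskyInv {w : ℝ} (hw : 2 < w) :
    HasDerivAt joukowskyInv (joukowskyInv w / √(w ^ 2 - 4)) w := by
  have h := ((hasDerivAt_id' w).fun_add (hasDerivAt_sqrt_sq_sub_four hw)).div_const 2
  have hr : 0 < √(w ^ 2 - 4) := Real.sqrt_pos.2 (sq_sub_four_pos hw)
  refine h.congr_deriv ?_
  unfold joukowskyInv
  field_simp
  ring

lemma hasDerivAt_joukowskyInv_rpow (β : ℝ) {w : ℝ} (hw : 2 < w) :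
    HasDerivAt (fun x => joukowskyInv x ^ β) (β * joukowskyInv w ^ β / √(w ^ 2 - 4)) w := by
  have hv := joukowskyInv_pos hw.le
  have h := (hasDerivAt_joukowskyInv hw).rpow_const (p := β) (Or.inl hv.ne')
  refine h.congr_deriv ?_
  rw [Real.rpow_sub_one hv.ne']
  field_simp

lemma hasDerivAt_powSumDeriv (β : ℝ) (n : ℕ) {w : ℝ} (hw : 2 < w) :
    HasDerivAt (powSumDeriv β n) (powSumDeriv β (n + 1) w) w := by
  have hq := sq_sub_four_pos hw
  have hr : 0 < √(w ^ 2 - 4) := Real.sqrt_pos.2 hq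
  have hr2 : √(w ^ 2 - 4) ^ 2 = w ^ 2 - 4 := Real.sq_sqrt hq.le
  have hA := hasDerivAt_joukowskyInv_rpow β hw
  have hB := hasDerivAt_joukowskyInv_rpow (-β) hw
  induction n using Nat.twoStepInduction with
  | zero =>
    change HasDerivAt (fun w => joukowskyInv w ^ β + joukowskyInv w ^ (-β)) _ w
    refine (hA.fun_add hB).congr_deriv ?_
    simp only [powSumDeriv]
    ring
  | one =>
    have h := ((hA.fun_sub hB).const_mul β).fun_div (hasDerivAt_sqrt_sq_sub_four hw) hr.ne'
    change HasDerivAt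
      (fun w => β * (joukowskyInv w ^ β - joukowskyInv w ^ (-β)) / √(w ^ 2 - 4)) _ w
    refine h.congr_deriv ?_
    simp only [powSumDeriv, powSum]
    generalize √(w ^ 2 - 4) = r at *
    rw [← hr2]
    field_simp
    push_cast
    ring
  | more n h0 h1 =>
    have h := (((((hasDerivAt_id' w).const_mul (2 * (n : ℝ) + 1)).fun_mul h1).fun_add
      (h0.const_mul ((n : ℝ) ^ 2 - β ^ 2))).fun_neg).fun_div
        (((hasDerivAt_id' w).fun_pow 2).sub_const 4) hq.ne'
    have e : powSumDeriv β (n + 2) = fun w => -((2 * n + 1) * w * powSumDeriv β (n + 1) w +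
      ((n : ℝ) ^ 2 - β ^ 2) * powSumDeriv β n w) / (w ^ 2 - 4) := by
      funext x; rw [powSumDeriv]
    have e2 : -((2 * n + 1) * w * powSumDeriv β (n + 1) w +
        ((n : ℝ) ^ 2 - β ^ 2) * powSumDeriv β n w) = powSumDeriv β (n + 2) w * (w ^ 2 - 4) := by
      rw [e]; field_simp
    have e3 : powSumDeriv β (n + 2 + 1) w = -((2 * (n + 1 : ℕ) + 1) * w * powSumDeriv β (n + 2) w +
      (((n + 1 : ℕ) : ℝ) ^ 2 - β ^ 2) * powSumDeriv β (n + 1) w) / (w ^ 2 - 4) := by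
      rw [powSumDeriv]
    rw [← e] at h
    refine h.congr_deriv ?_
    rw [e2, e3]
    field_simp
    push_cast
    ring

lemma mul_powSumDeriv_two (β : ℝ) {w : ℝ} (hw : 2 < w) :
    (w ^ 2 - 4) * powSumDeriv β 2 w = β ^ 2 * powSum β w - w * powSumDeriv β 1 w := by
  have hq := sq_sub_four_pos hw
  rw [powSumDeriv.eq_3, powSumDeriv.eq_1]
  field_simp
  push_cast
  ring

lemma tendsto_joukowskyInv : Tendsto joukowskyInv (𝓝[>] 2) (𝓝 1) := by
  have h : Continuous joukowskyInv := by unfold joukowskyInv; fun_prop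
  have h2 : joukowskyInv 2 = 1 := by norm_num [joukowskyInv]
  exact h2 ▸ (h.tendsto 2).mono_left nhdsWithin_le_nhds

lemma tendsto_weight_mul_powSumDeriv (β : ℝ) (n : ℕ) :
    Tendsto (fun w => (w ^ 2 - 4) ^ n * √(w ^ 2 - 4) * powSumDeriv β (n + 1) w) (𝓝[>] 2) (𝓝 0) := by
  have hA (γ : ℝ) : Tendsto (fun w => joukowskyInv w ^ γ) (𝓝[>] 2) (𝓝 1) := by
    simpa using tendsto_joukowskyInv.rpow_const (p := γ) (Or.inl one_ne_zero)
  have hid : Tendsto (fun w : ℝ => w) (𝓝[>] 2) (𝓝 2) := nhdsWithin_le_nhds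
  have hq : Tendsto (fun w : ℝ => w ^ 2 - 4) (𝓝[>] 2) (𝓝 0) := by
    have := (hid.pow 2).sub_const 4
    norm_num at this
    exact this
  have hr : Tendsto (fun w : ℝ => √(w ^ 2 - 4)) (𝓝[>] 2) (𝓝 0) := by
    simpa using hq.sqrt
  have h0 : Tendsto (fun w => (w ^ 2 - 4) ^ 0 * √(w ^ 2 - 4) * powSumDeriv β (0 + 1) w)
      (𝓝[>] 2) (𝓝 0) := by
    have h := ((hA β).sub (hA (-β))).const_mul β
    rw [sub_self, mul_zero] at h
    refine h.congr' ?_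
    filter_upwards [self_mem_nhdsWithin] with w hw
    have : 0 < √(w ^ 2 - 4) := Real.sqrt_pos.2 (sq_sub_four_pos hw)
    simp only [powSumDeriv]
    field_simp
  induction n using Nat.twoStepInduction with
  | zero => exact h0
  | one =>
    have h := ((hr.mul ((hA β).add (hA (-β)))).const_mul (β ^ 2)).sub (hid.mul h0)
    simp only [zero_mul, mul_zero, sub_self] at h
    refine h.congr' ?_
    filter_upwards [self_mem_nhdsWithin] with w hw
    have := mul_powSumDeriv_two β hw
    unfold powSum at this
    linear_combination (-√(w ^ 2 - 4)) * this
  | more n h1 h2 =>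
    have h := ((hid.mul h2).const_mul (-(2 * (n + 1 : ℕ) + 1 : ℝ))).sub
      ((hq.mul h1).const_mul (((n + 1 : ℕ) : ℝ) ^ 2 - β ^ 2))
    simp only [mul_zero, sub_self] at h
    refine h.congr' ?_
    filter_upwards [self_mem_nhdsWithin] with w hw
    have := (sq_sub_four_pos hw).ne'
    rw [powSumDeriv.eq_def β (n + 2 + 1)]
    field_simp
    ring

lemma nonneg_of_tendsto_of_deriv_nonneg {a : ℝ} {F F' : ℝ → ℝ}
    (hF : ∀ x, a < x → HasDerivAt F (F' x) x) (hF' : ∀ x, a < x → 0 ≤ F' x)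
    (hlim : Tendsto F (𝓝[>] a) (𝓝 0)) {x : ℝ} (hx : a < x) : 0 ≤ F x := by
  have hmono : MonotoneOn F (Ioi a) := by
    refine monotoneOn_of_deriv_nonneg (convex_Ioi a)
      (fun y hy => (hF y hy).continuousAt.continuousWithinAt)
      (fun y hy => ?_) (fun y hy => ?_) <;> rw [interior_Ioi] at hy
    · exact (hF y hy).differentiableAt.differentiableWithinAt
    · rw [(hF y hy).deriv]; exact hF' y hy
  refine le_of_tendsto hlim ?_
  filter_upwards [Ioo_mem_nhdsGT hx] with y hy
  exact hmono hy.1 hx hy.2.le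

lemma hasDerivAt_weight_mul_powSumDeriv (β : ℝ) (n : ℕ) {w : ℝ} (hw : 2 < w) :
    HasDerivAt (fun w => (w ^ 2 - 4) ^ (n + 1) * √(w ^ 2 - 4) * powSumDeriv β (n + 2) w)
      (-((w ^ 2 - 4) ^ n * √(w ^ 2 - 4) *
        (((n + 1 : ℕ) : ℝ) ^ 2 - β ^ 2) * powSumDeriv β (n + 1) w)) w := by
  have hq := sq_sub_four_pos hw
  have hr : 0 < √(w ^ 2 - 4) := Real.sqrt_pos.2 hq
  have hr2 : √(w ^ 2 - 4) ^ 2 = w ^ 2 - 4 := Real.sq_sqrt hq.le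
  have h := (((((hasDerivAt_id' w).fun_pow 2).sub_const 4).fun_pow (n + 1)).fun_mul
    (hasDerivAt_sqrt_sq_sub_four hw)).fun_mul (hasDerivAt_powSumDeriv β (n + 2) hw)
  refine h.congr_deriv ?_
  rw [powSumDeriv.eq_def β (n + 2 + 1)]
  simp only [Nat.add_sub_cancel]
  generalize √(w ^ 2 - 4) = r at *
  rw [← hr2]
  field_simp
  push_cast
  ring

lemma powSumDeriv_one_nonneg (β : ℝ) {w : ℝ} (hw : 2 < w) : 0 ≤ powSumDeriv β 1 w := by
  have hv := one_lt_joukowskyInv hw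
  simp only [powSumDeriv]
  refine div_nonneg ?_ (Real.sqrt_nonneg _)
  rcases le_total 0 β with h | h
  · exact mul_nonneg h (sub_nonneg.2 (Real.rpow_le_rpow_of_exponent_le hv.le (by linarith)))
  · exact mul_nonneg_of_nonpos_of_nonpos h
      (sub_nonpos.2 (Real.rpow_le_rpow_of_exponent_le hv.le (by linarith)))

lemma powSumDeriv_one_pos {β : ℝ} (hβ : β ≠ 0) {w : ℝ} (hw : 2 < w) : 0 < powSumDeriv β 1 w := by
  have hv := one_lt_joukowskyInv hw
  simp only [powSumDeriv]
  refine div_pos ?_ (Real.sqrt_pos.2 (sq_sub_four_pos hw))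
  rcases hβ.lt_or_gt with h | h
  · exact mul_pos_of_neg_of_neg h
      (sub_neg.2 (Real.rpow_lt_rpow_of_exponent_lt hv (by linarith)))
  · exact mul_pos h (sub_pos.2 (Real.rpow_lt_rpow_of_exponent_lt hv (by linarith)))

lemma neg_one_pow_mul_powSumDeriv_nonneg {β : ℝ} (hβ : |β| ≤ 1) (n : ℕ) :
    ∀ w, 2 < w → 0 ≤ (-1) ^ n * powSumDeriv β (n + 1) w := by
  have hβ2 : β ^ 2 ≤ 1 := (sq_le_one_iff_abs_le_one β).2 hβ
  induction n with
  | zero => intro w hw; simpa using powSumDeriv_one_nonneg β hw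
  | succ n ih =>
    intro w hw
    have hlim := (tendsto_weight_mul_powSumDeriv β (n + 1)).const_mul ((-1) ^ (n + 1))
    rw [mul_zero] at hlim
    have key := nonneg_of_tendsto_of_deriv_nonneg
      (fun x hx => (hasDerivAt_weight_mul_powSumDeriv β n hx).const_mul ((-1) ^ (n + 1)))
      (fun x hx => ?_) hlim hw
    · have hq := sq_sub_four_pos hw
      have hr : 0 < √(w ^ 2 - 4) := Real.sqrt_pos.2 hq
      have hc : 0 < (w ^ 2 - 4) ^ (n + 1) * √(w ^ 2 - 4) := by positivity
      refine nonneg_of_mul_nonneg_right ?_ hc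
      refine key.trans_eq ?_
      ring
    · have hq := sq_sub_four_pos hx
      have hn : 0 ≤ ((n + 1 : ℕ) : ℝ) ^ 2 - β ^ 2 := by
        push_cast
        nlinarith [(Nat.cast_nonneg n : (0 : ℝ) ≤ n)]
      have := mul_nonneg (mul_nonneg (mul_nonneg (pow_nonneg hq.le n)
        (Real.sqrt_nonneg (x ^ 2 - 4))) hn) (ih x hx)
      refine this.trans_eq ?_
      ring

/-- `f` and the functions `-f', f'', …, (-1) ^ n f⁽ⁿ⁾` are nonnegative on `(a, ∞)`. -/
def AltNonneg (a : ℝ) : ℕ → (ℝ → ℝ) → Prop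
  | 0, f => ∀ x, a < x → 0 ≤ f x
  | n + 1, f => (∀ x, a < x → 0 ≤ f x) ∧
      ∃ f' : ℝ → ℝ, (∀ x, a < x → HasDerivAt f (-f' x) x) ∧ AltNonneg a n f'

namespace AltNonneg

variable {a : ℝ} {n : ℕ} {f g : ℝ → ℝ}

lemma nonneg (h : AltNonneg a n f) : ∀ x, a < x → 0 ≤ f x := by
  cases n with
  | zero => exact h
  | succ n => exact h.1

lemma of_succ (h : AltNonneg a (n + 1) f) : AltNonneg a n f := by
  induction n generalizing f with
  | zero => exact h.1
  | succ n ih =>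
    obtain ⟨h0, f', hf', h⟩ := h
    exact ⟨h0, f', hf', ih h⟩

lemma add (hf : AltNonneg a n f) (hg : AltNonneg a n g) :
    AltNonneg a n (fun x => f x + g x) := by
  induction n generalizing f g with
  | zero => exact fun x hx => add_nonneg (hf x hx) (hg x hx)
  | succ n ih =>
    obtain ⟨hf0, f', hf', hf⟩ := hf
    obtain ⟨hg0, g', hg', hg⟩ := hg
    exact ⟨fun x hx => add_nonneg (hf0 x hx) (hg0 x hx), _,
      fun x hx => ((hf' x hx).fun_add (hg' x hx)).congr_deriv (by ring), ih hf hg⟩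

lemma mul (hf : AltNonneg a n f) (hg : AltNonneg a n g) :
    AltNonneg a n (fun x => f x * g x) := by
  induction n generalizing f g with
  | zero => exact fun x hx => mul_nonneg (hf x hx) (hg x hx)
  | succ n ih =>
    have hf1 := hf.of_succ
    have hg1 := hg.of_succ
    obtain ⟨hf0, f', hf', hf⟩ := hf
    obtain ⟨hg0, g', hg', hg⟩ := hg
    exact ⟨fun x hx => mul_nonneg (hf0 x hx) (hg0 x hx), _,
      fun x hx => ((hf' x hx).fun_mul (hg' x hx)).congr_deriv (by ring),
      (ih hf hg1).add (ih hf1 hg)⟩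

lemma const {c : ℝ} (hc : 0 ≤ c) : AltNonneg a n (fun _ => c) := by
  induction n generalizing c with
  | zero => exact fun _ _ => hc
  | succ n ih =>
    exact ⟨fun _ _ => hc, fun _ => 0, fun x _ => (hasDerivAt_const x c).congr_deriv (by simp),
      ih le_rfl⟩

/-- The reciprocal of a positive function with completely monotone derivative. -/
lemma inv {g' : ℝ → ℝ} (hpos : ∀ x, a < x → 0 < g x) (hg : ∀ x, a < x → HasDerivAt g (g' x) x)
    (hg' : ∀ n, AltNonneg a n g') : AltNonneg a n (fun x => (g x)⁻¹) := by
  induction n with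
  | zero => exact fun x hx => (inv_pos.2 (hpos x hx)).le
  | succ n ih =>
    refine ⟨fun x hx => (inv_pos.2 (hpos x hx)).le, fun x => g' x * ((g x)⁻¹ * (g x)⁻¹),
      fun x hx => ((hg x hx).fun_inv (hpos x hx).ne').congr_deriv ?_, (hg' n).mul (ih.mul ih)⟩
    have := (hpos x hx).ne'
    field_simp

lemma iteratedDeriv_nonneg (h : AltNonneg a n f) {x : ℝ} (hx : a < x) :
    0 ≤ (-1 : ℝ) ^ n * iteratedDeriv n f x := by
  induction n generalizing f with
  | zero => simpa using h x hx
  | succ n ih =>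
    obtain ⟨-, f', hf', h⟩ := h
    have e : deriv f =ᶠ[𝓝 x] -f' := by
      filter_upwards [Ioi_mem_nhds hx] with y hy
      exact (hf' y hy).deriv
    rw [iteratedDeriv_succ', e.iteratedDeriv_eq n, iteratedDeriv_neg]
    refine (ih h).trans_eq ?_
    ring

end AltNonneg

lemma altNonneg_powSumDeriv {β : ℝ} (hβ : |β| ≤ 1) (n : ℕ) :
    AltNonneg 2 n (powSumDeriv β 1) := by
  suffices h : ∀ k, AltNonneg 2 n (fun w => (-1) ^ k * powSumDeriv β (k + 1) w) by
    simpa using h 0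
  induction n with
  | zero => exact fun k => neg_one_pow_mul_powSumDeriv_nonneg hβ k
  | succ n ih =>
    exact fun k => ⟨neg_one_pow_mul_powSumDeriv_nonneg hβ k, _,
      fun x hx => ((hasDerivAt_powSumDeriv β (k + 1) hx).const_mul _).congr_deriv (by ring),
      ih (k + 1)⟩

/-- A function that vanishes to the left of `a` has only zero derivatives (in the sense of `deriv`)
at `a`, so complete monotonicity on `[a, ∞)` reduces to `(a, ∞)`. -/
lemma completelyMonotoneOn_indicator {a : ℝ} {f : ℝ → ℝ} (hf : ∀ n, AltNonneg a n f)
    (ha : 0 ≤ f a) : CompletelyMonotoneOn ((Ici a).indicator f) (Ici a) := by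
  have hleft (n : ℕ) : ∀ x < a, iteratedDeriv n ((Ici a).indicator f) x = 0 := by
    intro x hx
    have e : (Ici a).indicator f =ᶠ[𝓝 x] fun _ => 0 := by
      filter_upwards [Iio_mem_nhds hx] with y hy
      exact indicator_of_notMem (not_le.2 hy) f
    rw [e.iteratedDeriv_eq n]
    simp
  have hmid (n : ℕ) : iteratedDeriv (n + 1) ((Ici a).indicator f) a = 0 := by
    rw [iteratedDeriv_succ]
    set g := iteratedDeriv n ((Ici a).indicator f)
    by_cases hd : DifferentiableAt ℝ g a
    · have hlim : Tendsto g (𝓝[<] a) (𝓝 0) :=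
        tendsto_const_nhds.congr' <| by
          filter_upwards [self_mem_nhdsWithin] with y hy using (hleft n y hy).symm
      have hga : g a = 0 :=
        tendsto_nhds_unique (hd.continuousAt.tendsto.mono_left nhdsWithin_le_nhds) hlim
      have h1 : HasDerivWithinAt g (deriv g a) (Iic a) a := hd.hasDerivAt.hasDerivWithinAt
      have h2 : HasDerivWithinAt g 0 (Iic a) a := by
        refine (hasDerivWithinAt_const a (Iic a) (0 : ℝ)).congr (fun y hy => ?_) hga
        rcases (mem_Iic.1 hy).lt_or_eq with h | h
        · exact hleft n y h
        · rw [h, hga]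
      exact (uniqueDiffWithinAt_Iic a).eq_deriv _ h1 h2
    · exact deriv_zero_of_not_differentiableAt hd
  intro n x hx
  rcases (mem_Ici.1 hx).lt_or_eq with h | rfl
  · have e : (Ici a).indicator f =ᶠ[𝓝 x] f := by
      filter_upwards [Ioi_mem_nhds h] with y hy
      exact indicator_of_mem (mem_Ici.2 (le_of_lt hy)) f
    rw [e.iteratedDeriv_eq n]
    exact (hf n).iteratedDeriv_nonneg h
  · cases n with
    | zero => simpa using ha
    | succ n => rw [hmid n, mul_zero]

/-- The reciprocal of `m_α(uv) m_α(u/v)` as a function of `w = v + 1 / v`, up to the factor `u ^ (2α)`;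
here `k = u ^ α + u ^ (-α)` and `c = cos (π α)`. -/
noncomputable def mixDenom (α c k w : ℝ) : ℝ :=
  powSum α w ^ 2 + 2 * (c * k) * powSum α w + (k ^ 2 + 4 * c ^ 2 - 4)

lemma mAlpha_mul_mAlpha (α c : ℝ) {u v : ℝ} (hu : 0 < u) (hv : 0 < v) :
    1 / ((u * v) ^ (2 * α) + 2 * c * (u * v) ^ α + 1) *
      (1 / ((u / v) ^ (2 * α) + 2 * c * (u / v) ^ α + 1)) =
    ((u ^ α) ^ 2)⁻¹ * (mixDenom α c (u ^ α + (u ^ α)⁻¹) (v + 1 / v))⁻¹ := by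
  have hU : 0 < u ^ α := Real.rpow_pos_of_pos hu _
  have hV : 0 < v ^ α := Real.rpow_pos_of_pos hv _
  rw [mixDenom, powSum_add_one_div α hv, mul_comm 2 α, Real.rpow_mul (mul_pos hu hv).le,
    Real.rpow_mul (div_pos hu hv).le, Real.rpow_two, Real.rpow_two, Real.mul_rpow hu.le hv.le,
    Real.div_rpow hu.le hv.le, one_div, one_div, ← mul_inv, ← mul_inv]
  congr 1
  field_simp
  ring

lemma hasDerivAt_mixDenom (α c k : ℝ) {w : ℝ} (hw : 2 < w) :
    HasDerivAt (mixDenom α c k) (2 * (powSum α w + c * k) * powSumDeriv α 1 w) w := by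
  have hp : HasDerivAt (powSum α) (powSumDeriv α 1 w) w := hasDerivAt_powSumDeriv α 0 hw
  have h := ((hp.fun_pow 2).fun_add (hp.const_mul (2 * (c * k)))).add_const
    (k ^ 2 + 4 * c ^ 2 - 4)
  refine h.congr_deriv ?_
  push_cast
  ring

lemma HCM_mAlpha {α c : ℝ} (hα : |α| ≤ 1 / 2) (hc : 0 ≤ c) :
    HCM (fun u : ℝ => 1 / (u ^ (2 * α) + 2 * c * u ^ α + 1)) := by
  intro u hu
  have hU : 0 < u ^ α := Real.rpow_pos_of_pos hu _
  set k := u ^ α + (u ^ α)⁻¹ with hk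
  have hk2 : 2 ≤ k := by
    rw [hk, ← one_div]
    exact two_le_add_one_div hU
  have hpos : ∀ w, 2 ≤ w → 0 < mixDenom α c k w := fun w hw => by
    have h1 := two_le_powSum α hw
    have h2 : 0 ≤ 2 * (c * k) * powSum α w := by positivity
    unfold mixDenom
    nlinarith
  have hα1 : |α| ≤ 1 := hα.trans (by norm_num)
  have hα2 : |2 * α| ≤ 1 := by rw [abs_mul, abs_two]; linarith
  have hder : ∀ w, 2 < w → HasDerivAt (mixDenom α c k)
      (powSumDeriv (2 * α) 1 w + 2 * (c * k) * powSumDeriv α 1 w) w := fun w hw => by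
    have h := (((hasDerivAt_powSumDeriv (2 * α) 0 hw).add_const 2).fun_add
      ((hasDerivAt_powSumDeriv α 0 hw).const_mul (2 * (c * k)))).add_const (k ^ 2 + 4 * c ^ 2 - 4)
    refine h.congr_of_eventuallyEq ?_
    filter_upwards [Ioi_mem_nhds hw] with x hx
    rw [mixDenom, powSum_sq α (le_of_lt hx)]
    rfl
  have hck : 0 ≤ 2 * (c * k) := by positivity
  have hcm : ∀ n, AltNonneg 2 n (fun w => ((u ^ α) ^ 2)⁻¹ * (mixDenom α c k w)⁻¹) := fun n =>
    (AltNonneg.const (by positivity)).mul <| AltNonneg.inv (fun w hw => hpos w hw.le) hder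
      fun n => (altNonneg_powSumDeriv hα2 n).add
        ((AltNonneg.const hck).mul (altNonneg_powSumDeriv hα1 n))
  refine ⟨_, completelyMonotoneOn_indicator hcm ?_, fun v hv => ?_⟩
  · have := hpos 2 le_rfl
    positivity
  · rw [indicator_of_mem (mem_Ici.2 (two_le_add_one_div hv))]
    exact mAlpha_mul_mAlpha α c hu hv

/-- If `m_α` is hyperbolically completely monotone, then for arbitrarily large `k` the reciprocal of
`mixDenom` is completely monotone on `(2, ∞)`. -/
lemma exists_of_HCM_mAlpha {α c : ℝ} (hα : α ≠ 0)
    (h : HCM (fun u : ℝ => 1 / (u ^ (2 * α) + 2 * c * u ^ α + 1))) (M : ℝ) :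
    ∃ k > M, ∀ n : ℕ, ∀ w, 2 < w →
      0 ≤ (-1 : ℝ) ^ n * iteratedDeriv n (fun w => (mixDenom α c k w)⁻¹) w := by
  set U := |M| + 1
  have hU : 0 < U := by positivity
  have hu : 0 < U ^ α⁻¹ := Real.rpow_pos_of_pos hU _
  have huα : (U ^ α⁻¹) ^ α = U := Real.rpow_inv_rpow hU.le hα
  obtain ⟨H, hH, hprod⟩ := h _ hu
  refine ⟨U + U⁻¹, ?_, fun n w hw => ?_⟩
  · have := le_abs_self M
    have := inv_pos.2 hU
    linarith
  · have e : (fun w => (mixDenom α c (U + U⁻¹) w)⁻¹) =ᶠ[𝓝 w] fun w => U ^ 2 * H w := by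
      filter_upwards [Ioi_mem_nhds hw] with x hx
      have hv := joukowskyInv_pos (le_of_lt hx)
      have hp := hprod _ hv
      rw [add_one_div_joukowskyInv (le_of_lt hx)] at hp
      have hm := mAlpha_mul_mAlpha α c hu hv
      rw [add_one_div_joukowskyInv (le_of_lt hx), huα] at hm
      rw [← hp, hm]
      field_simp
    rw [e.iteratedDeriv_eq n, iteratedDeriv_const_mul_field, mul_left_comm]
    exact mul_nonneg (sq_nonneg U) (hH n w hw.le)

lemma not_HCM_mAlpha_of_neg {α c : ℝ} (hα : α ≠ 0) (hc : c < 0) (hc1 : c ^ 2 ≤ 1) :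
    ¬ HCM (fun u : ℝ => 1 / (u ^ (2 * α) + 2 * c * u ^ α + 1)) := by
  intro h
  obtain ⟨k, hk, hcm⟩ := exists_of_HCM_mAlpha hα h (max 2 (powSum α 3 / -c))
  obtain ⟨hk2, hk⟩ := max_lt_iff.1 hk
  rw [div_lt_iff₀ (by linarith)] at hk
  have hneg : powSum α 3 + c * k < 0 := by linarith
  have hQ : 0 < mixDenom α c k 3 := by
    have e : mixDenom α c k 3 = (powSum α 3 + c * k) ^ 2 + (k ^ 2 - 4) * (1 - c ^ 2) := by
      unfold mixDenom; ring
    rw [e]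
    have := sq_pos_of_neg hneg
    have : 0 ≤ (k ^ 2 - 4) * (1 - c ^ 2) := mul_nonneg (by nlinarith) (by linarith)
    linarith
  have hd := (hasDerivAt_mixDenom α c k (by norm_num : (2 : ℝ) < 3)).fun_inv hQ.ne'
  have h1 := hcm 1 3 (by norm_num)
  rw [iteratedDeriv_one, hd.deriv, pow_one, neg_one_mul, ← neg_div, neg_neg] at h1
  have hp := powSumDeriv_one_pos hα (by norm_num : (2 : ℝ) < 3)
  refine h1.not_gt (div_neg_of_neg_of_pos ?_ (by positivity))
  nlinarith [mul_pos_of_neg_of_neg hneg (neg_lt_zero.2 hp)]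

lemma powSumDeriv_two_pos {α : ℝ} (hα : 3 / 2 ≤ |α|) : 0 < powSumDeriv α 2 (10 / 3) := by
  have hw : (2 : ℝ) < 10 / 3 := by norm_num
  have h := mul_powSumDeriv_two α hw
  have hr : √((10 / 3 : ℝ) ^ 2 - 4) = 8 / 3 := by
    rw [show (10 / 3 : ℝ) ^ 2 - 4 = (8 / 3) ^ 2 by norm_num]
    exact Real.sqrt_sq (by norm_num)
  have hv := joukowskyInv_pos hw.le
  have hA : 0 < joukowskyInv (10 / 3) ^ α := Real.rpow_pos_of_pos hv _
  have hB : 0 < joukowskyInv (10 / 3) ^ (-α) := Real.rpow_pos_of_pos hv _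
  simp only [powSumDeriv.eq_2, powSum, hr] at h
  set A := joukowskyInv (10 / 3) ^ α
  set B := joukowskyInv (10 / 3) ^ (-α)
  have h1 : α * (A - B) ≤ |α| * (A + B) := by
    refine (le_abs_self _).trans ?_
    rw [abs_mul]
    gcongr
    rw [abs_le]
    constructor <;> linarith
  have h2 : 3 / 2 * (|α| * (A + B)) ≤ α ^ 2 * (A + B) := by
    rw [← sq_abs α]
    have : 0 ≤ |α| * (A + B) := by positivity
    nlinarith
  have h3 : 0 < |α| * (A + B) := mul_pos (by linarith) (by linarith)
  have : 0 < ((10 / 3 : ℝ) ^ 2 - 4) * powSumDeriv α 2 (10 / 3) := by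
    rw [h]
    linarith
  exact pos_of_mul_pos_right this (by norm_num)

lemma not_HCM_mAlpha_of_nonneg {α c : ℝ} (hα : 3 / 2 ≤ |α|) (hc : 0 ≤ c) (hc1 : c ≤ 1) :
    ¬ HCM (fun u : ℝ => 1 / (u ^ (2 * α) + 2 * c * u ^ α + 1)) := by
  intro h
  have hα0 : α ≠ 0 := fun h0 => by norm_num [h0] at hα
  have hw : (2 : ℝ) < 10 / 3 := by norm_num
  set s := powSum α (10 / 3) with hs
  set s1 := powSumDeriv α 1 (10 / 3) with hs1
  set s2 := powSumDeriv α 2 (10 / 3) with hs2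
  have hs_two : 2 ≤ s := two_le_powSum α hw.le
  have hs2pos : 0 < s2 := powSumDeriv_two_pos hα
  obtain ⟨k, hk, hcm⟩ := exists_of_HCM_mAlpha hα0 h (max 2 (4 * (s + 1) * s1 ^ 2 / s2))
  obtain ⟨hk2, hk⟩ := max_lt_iff.1 hk
  rw [div_lt_iff₀ hs2pos] at hk
  have hQ : ∀ w, 2 < w → k ^ 2 ≤ mixDenom α c k w := fun w hw => by
    have h1 := two_le_powSum α hw.le
    have h2 : 0 ≤ 2 * (c * k) * powSum α w := by positivity
    unfold mixDenom
    nlinarith [sq_nonneg c]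
  have hk0 : 0 < k ^ 2 := by positivity
  have e1 : deriv (fun w => (mixDenom α c k w)⁻¹) =ᶠ[𝓝 (10 / 3)]
      fun w => -(2 * (powSum α w + c * k) * powSumDeriv α 1 w) / mixDenom α c k w ^ 2 := by
    filter_upwards [Ioi_mem_nhds hw] with w hw
    exact ((hasDerivAt_mixDenom α c k hw).fun_inv (hk0.trans_le (hQ w hw)).ne').deriv
  have hQ0 := hQ _ hw
  have hQpos := hk0.trans_le hQ0
  have hp : HasDerivAt (powSum α) s1 (10 / 3) := hasDerivAt_powSumDeriv α 0 hw
  have hp1 : HasDerivAt (powSumDeriv α 1) s2 (10 / 3) := hasDerivAt_powSumDeriv α 1 hw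
  have hd := ((((hp.add_const (c * k)).const_mul 2).fun_mul hp1).fun_neg).fun_div
    ((hasDerivAt_mixDenom α c k hw).fun_pow 2) (by positivity)
  have h2 := hcm 2 (10 / 3) hw
  rw [iteratedDeriv_succ, iteratedDeriv_one, e1.deriv_eq, hd.deriv] at h2
  simp only [← hs, ← hs1, even_two, Even.neg_pow, one_pow, one_mul] at h2
  set Q := mixDenom α c k (10 / 3)
  have hck : c * k ≤ k := by nlinarith
  have hck0 : 0 ≤ c * k := by positivity
  set a := c * k
  have key : 4 * (s + a) * s1 ^ 2 < Q * s2 := by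
    have t1 : 4 * (s + a) * s1 ^ 2 ≤ k * (4 * (s + 1) * s1 ^ 2) := by
      have : s + a ≤ k * (s + 1) := by nlinarith
      nlinarith [sq_nonneg s1]
    have t2 : k * (4 * (s + 1) * s1 ^ 2) < k * (k * s2) := by gcongr
    have t3 : k * (k * s2) ≤ Q * s2 := by nlinarith
    linarith
  refine h2.not_gt (div_neg_of_neg_of_pos ?_ (by positivity))
  have key2 := mul_pos (mul_pos hQpos (by linarith : 0 < s + a)) (sub_pos.2 key)
  have key3 : 0 ≤ Q ^ 2 * s1 ^ 2 := by positivity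
  push_cast
  nlinarith

theorem mAlpha_HCM_iff (α : ℝ) :
    HCM (fun u : ℝ =>
        1 / (u ^ (2 * α) + 2 * Real.cos (Real.pi * α) * u ^ α + 1)) ↔ |α| ≤ 1/2 := by
  have hpi := Real.pi_pos
  have habs : Real.cos (Real.pi * α) = Real.cos (Real.pi * |α|) := by
    rw [← Real.cos_abs, abs_mul, abs_of_pos hpi]
  constructor
  · intro h
    by_contra! hα
    have hα0 : α ≠ 0 := fun h0 => by norm_num [h0] at hα
    rcases lt_or_ge (Real.cos (Real.pi * α)) 0 with hc | hc
    · exact not_HCM_mAlpha_of_neg hα0 hc (Real.cos_sq_le_one _) h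
    · refine not_HCM_mAlpha_of_nonneg ?_ hc (Real.cos_le_one _) h
      by_contra! hlt
      rw [habs] at hc
      exact hc.not_gt (Real.cos_neg_of_pi_div_two_lt_of_lt (by nlinarith) (by nlinarith))
  · intro h
    refine HCM_mAlpha h ?_
    rw [habs]
    exact Real.cos_nonneg_of_mem_Icc ⟨by nlinarith [abs_nonneg α], by nlinarith⟩
end

section
/- For every λ ≥ 0 and α ∈ (0,1), 1/(1 + λ^α) = exp( −α ∫_0^∞ (1 − e^{−λx}) E_α(−x^α) dx/x ), where E_α(y) = Σ_{n≥0} y^n/Γ(1+αn) is the Mittag–Leffler function. -/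
/-- The classical Mittag-Leffler function. -/
noncomputable def mittagLeffler (α y : ℝ) : ℝ :=
  ∑' n : ℕ, y ^ n / Real.Gamma (1 + α * n)

open MeasureTheory Set Filter Topology

/-- Restricting the Gamma integral to `(T, ∞)` bounds `Γ` from below. -/
lemma Real.rpow_mul_exp_neg_le_Gamma {T p : ℝ} (hT : 0 ≤ T) (hp : 0 ≤ p) :
    T ^ p * Real.exp (-T) ≤ Real.Gamma (p + 1) := by
  have hint := Real.GammaIntegral_convergent (s := p + 1) (by linarith)
  simp only [add_sub_cancel_right] at hint
  rw [Real.Gamma_eq_integral (by linarith), ← integral_exp_neg_Ioi, ← integral_const_mul]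
  simp only [add_sub_cancel_right]
  refine le_trans ?_ (setIntegral_mono_set hint ?_ (Ioi_subset_Ioi hT).eventuallyLE)
  · refine setIntegral_mono_on ?_ (hint.mono_set (Ioi_subset_Ioi hT)) measurableSet_Ioi ?_
    · exact (integrableOn_exp_neg_Ioi T).const_mul (T ^ p)
    · intro x hx
      rw [mul_comm]
      gcongr
      exact le_of_lt hx
  · filter_upwards [ae_restrict_mem measurableSet_Ioi] with x hx
    have : (0 : ℝ) < x := hx
    simp only [Pi.zero_apply]
    positivity

lemma summable_pow_div_Gamma {α c : ℝ} (hα : 0 < α) (hc : 1 ≤ c) (R : ℝ) :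
    Summable fun n : ℕ => R ^ n / Real.Gamma (c + α * n) := by
  set S : ℝ := 2 * (|R| + 1) with hS
  have hS1 : 1 ≤ S := by rw [hS]; linarith [abs_nonneg R]
  set T : ℝ := S ^ α⁻¹ with hTdef
  have hT1 : 1 ≤ T := Real.one_le_rpow hS1 (by positivity)
  have hTα : T ^ α = S := Real.rpow_inv_rpow (by linarith) hα.ne'
  refine Summable.of_norm_bounded (g := fun n : ℕ => Real.exp T * (1 / 2 : ℝ) ^ n)
    (summable_geometric_two.mul_left _) fun n => ?_
  have hn : 0 ≤ α * n := by positivity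
  have hΓ : S ^ n * Real.exp (-T) ≤ Real.Gamma (c + α * n) := by
    have h := Real.rpow_mul_exp_neg_le_Gamma (T := T) (p := c + α * n - 1) (by linarith)
      (by linarith)
    rw [sub_add_cancel] at h
    refine le_trans ?_ h
    gcongr
    rw [← hTα, ← Real.rpow_mul_natCast (by linarith)]
    exact Real.rpow_le_rpow_of_exponent_le hT1 (by linarith)
  have hΓpos : 0 < Real.Gamma (c + α * n) := Real.Gamma_pos_of_pos (by linarith)
  rw [norm_div, norm_pow, Real.norm_eq_abs, Real.norm_of_nonneg hΓpos.le, div_le_iff₀ hΓpos]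
  have hR : |R| ^ n ≤ (S / 2) ^ n := by
    gcongr
    rw [hS]; linarith
  calc |R| ^ n ≤ (S / 2) ^ n := hR
    _ = Real.exp T * (1 / 2) ^ n * (S ^ n * Real.exp (-T)) := by
        rw [Real.exp_neg, div_pow, one_div, inv_pow]
        field_simp
    _ ≤ _ := by gcongr

lemma differentiable_mittagLeffler {α : ℝ} (hα : 0 < α) : Differentiable ℝ (mittagLeffler α) := by
  intro y
  set R : ℝ := |y| + 1 with hR
  have hR0 : 1 ≤ R := by rw [hR]; linarith [abs_nonneg y]
  refine HasDerivAt.differentiableAt (hasDerivAt_tsum_of_isPreconnected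
    (g := fun (n : ℕ) (z : ℝ) => z ^ n / Real.Gamma (1 + α * n))
    (g' := fun (n : ℕ) (z : ℝ) => n * z ^ (n - 1) / Real.Gamma (1 + α * n)) (t := Metric.ball 0 R)
    (u := fun n : ℕ => (2 * R) ^ n / Real.Gamma (1 + α * n)) (y₀ := 0)
    (summable_pow_div_Gamma hα le_rfl _) Metric.isOpen_ball
    (convex_ball _ _).isPreconnected ?_ ?_ ?_ (summable_pow_div_Gamma hα le_rfl _) ?_)
  · intro n z _
    exact (hasDerivAt_pow n z).div_const _
  · intro n z hz
    have hz' : |z| ≤ R := by simpa using (mem_ball_zero_iff.1 hz).le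
    have hΓpos : 0 < Real.Gamma (1 + α * n) := Real.Gamma_pos_of_pos (by positivity)
    rw [norm_div, norm_mul, norm_pow, Real.norm_of_nonneg hΓpos.le, Real.norm_natCast,
      Real.norm_eq_abs, mul_pow]
    gcongr
    · exact_mod_cast Nat.lt_two_pow_self.le
    · exact (pow_le_pow_left₀ (abs_nonneg z) hz' _).trans (pow_le_pow_right₀ hR0 (Nat.sub_le n 1))
  · simpa using (by linarith : 0 < R)
  · simp [hR]

lemma integral_rpow_mul_sub_rpow {p q x : ℝ} (hp : -1 < p) (hq : -1 < q) (hx : 0 < x) :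
    ∫ u in (0 : ℝ)..x, u ^ p * (x - u) ^ q =
      Real.Gamma (p + 1) * Real.Gamma (q + 1) / Real.Gamma (p + q + 2) * x ^ (p + q + 1) := by
  have h := Complex.betaIntegral_scaled ((p + 1 : ℝ) : ℂ) ((q + 1 : ℝ) : ℂ) hx
  rw [Complex.betaIntegral_eq_Gamma_mul_div _ _ (by rw [Complex.ofReal_re]; linarith)
    (by rw [Complex.ofReal_re]; linarith), ← Complex.ofReal_add, Complex.Gamma_ofReal,
    Complex.Gamma_ofReal, Complex.Gamma_ofReal] at h
  rw [← Complex.ofReal_inj, ← intervalIntegral.integral_ofReal]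
  have e : p + 1 + (q + 1) = p + q + 2 := by ring
  rw [e] at h
  convert h using 1
  · refine intervalIntegral.integral_congr fun u hu => ?_
    rw [uIcc_of_le hx.le] at hu
    rw [Complex.ofReal_mul, Complex.ofReal_cpow hu.1, Complex.ofReal_cpow (sub_nonneg.2 hu.2)]
    push_cast
    simp
  · rw [Complex.ofReal_mul, Complex.ofReal_cpow hx.le, mul_comm]
    push_cast
    ring_nf

/-- The kernel `v ^ (-α) + Γ(1 - α)` of the Volterra equation satisfied by `x ↦ E_α(-x ^ α)`. -/
noncomputable def mittagLefflerKernel (α v : ℝ) : ℝ :=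
  v ^ (-α) + Real.Gamma (1 - α)

lemma mittagLefflerKernel_pos {α v : ℝ} (hα : α < 1) (hv : 0 ≤ v) :
    0 < mittagLefflerKernel α v :=
  add_pos_of_nonneg_of_pos (Real.rpow_nonneg hv _) (Real.Gamma_pos_of_pos (by linarith))

lemma measurable_mittagLefflerKernel (α : ℝ) : Measurable (mittagLefflerKernel α) := by
  unfold mittagLefflerKernel
  fun_prop

lemma continuous_mittagLeffler_neg_rpow {α : ℝ} (hα : 0 < α) :
    Continuous fun x : ℝ => mittagLeffler α (-(x ^ α)) :=
  (differentiable_mittagLeffler hα).continuous.comp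
    (Real.continuous_rpow_const hα.le).neg

lemma intervalIntegrable_mittagLefflerKernel_sub {α : ℝ} (hα : α < 1) (x a b : ℝ) :
    IntervalIntegrable (fun u => mittagLefflerKernel α (x - u)) volume a b := by
  have h : IntervalIntegrable (mittagLefflerKernel α) volume (x - a) (x - b) :=
    (intervalIntegral.intervalIntegrable_rpow' (by linarith)).add intervalIntegrable_const
  simpa using h.comp_sub_left x

lemma intervalIntegrable_mittagLefflerKernel_mul {α : ℝ} (hα : α ∈ Ioo (0 : ℝ) 1) (x a b : ℝ) :
    IntervalIntegrable (fun u => mittagLefflerKernel α (x - u) * mittagLeffler α (-(u ^ α)))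
      volume a b :=
  (intervalIntegrable_mittagLefflerKernel_sub hα.2 x a b).mul_continuousOn
    (continuous_mittagLeffler_neg_rpow hα.1).continuousOn

lemma integral_mittagLefflerKernel_mul_rpow {α p x : ℝ} (hα : α < 1) (hp : 0 ≤ p) (hx : 0 < x) :
    ∫ u in (0 : ℝ)..x, mittagLefflerKernel α (x - u) * (u ^ p / Real.Gamma (1 + p)) =
      Real.Gamma (1 - α) * (x ^ (1 - α + p) / Real.Gamma (2 - α + p)) +
        Real.Gamma (1 - α) * (x ^ (1 + p) / Real.Gamma (2 + p)) := by
  have hΓ : Real.Gamma (1 + p) ≠ 0 := (Real.Gamma_pos_of_pos (by linarith)).ne'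
  have h1 : IntervalIntegrable (fun u : ℝ => u ^ p * (x - u) ^ (-α)) volume 0 x := by
    have h := (intervalIntegral.intervalIntegrable_rpow' (a := x - 0) (b := x - x)
      (show -1 < -α by linarith)).comp_sub_left x
    simp only [sub_sub_cancel] at h
    exact h.continuousOn_mul (Real.continuous_rpow_const hp).continuousOn
  have h2 : IntervalIntegrable (fun u : ℝ => u ^ p * (x - u) ^ (0 : ℝ)) volume 0 x := by
    simpa using intervalIntegral.intervalIntegrable_rpow' (a := 0) (b := x)
      (show -1 < p by linarith)
  calc _ = ∫ u in (0 : ℝ)..x, ((Real.Gamma (1 + p))⁻¹ * (u ^ p * (x - u) ^ (-α)) +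
        Real.Gamma (1 - α) / Real.Gamma (1 + p) * (u ^ p * (x - u) ^ (0 : ℝ))) := by
        congr 1 with u
        rw [mittagLefflerKernel, Real.rpow_zero]
        ring
    _ = _ := by
        rw [intervalIntegral.integral_add (h1.const_mul _) (h2.const_mul _),
          intervalIntegral.integral_const_mul, intervalIntegral.integral_const_mul,
          integral_rpow_mul_sub_rpow (by linarith) (by linarith) hx,
          integral_rpow_mul_sub_rpow (by linarith) (by linarith) hx]
        rw [zero_add, Real.Gamma_one, add_comm p 1, show -α + 1 = 1 - α by ring,
          show p + -α + 2 = 2 - α + p by ring, show p + -α + 1 = 1 - α + p by ring,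
          show p + 0 + 2 = 2 + p by ring, show p + 0 + 1 = 1 + p by ring]
        field_simp

/-- The function `x ↦ E_α(-x ^ α)` solves a Volterra equation of the first kind. -/
lemma integral_mittagLefflerKernel_mul_mittagLeffler {α x : ℝ} (hα : α ∈ Ioo (0 : ℝ) 1)
    (hx : 0 < x) :
    ∫ u in (0 : ℝ)..x, mittagLefflerKernel α (x - u) * mittagLeffler α (-(u ^ α)) =
      x ^ (1 - α) / (1 - α) := by
  obtain ⟨hα0, hα1⟩ := hα
  set a : ℕ → ℝ := fun n =>
    Real.Gamma (1 - α) * (x ^ (1 - α + α * n) / Real.Gamma (2 - α + α * n)) with ha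
  have hb : ∀ n : ℕ, ∫ u in Ioc 0 x, mittagLefflerKernel α (x - u) *
      (u ^ (α * n) / Real.Gamma (1 + α * n)) = a n + a (n + 1) := fun n => by
    rw [← intervalIntegral.integral_of_le hx.le,
      integral_mittagLefflerKernel_mul_rpow hα1 (by positivity) hx, ha]
    push_cast
    ring_nf
  have ha_sum (σ : ℝ) (hσ : |σ| = 1) : Summable fun n => σ ^ n * a n := by
    have := (summable_pow_div_Gamma hα0 (show 1 ≤ 2 - α by linarith) (σ * x ^ α)).mul_left
      (Real.Gamma (1 - α) * x ^ (1 - α))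
    refine this.congr fun n => ?_
    rw [ha]
    simp only
    rw [Real.rpow_add hx, Real.rpow_mul hx.le, Real.rpow_natCast, mul_pow]
    ring
  have hterm : ∀ n : ℕ, ∀ u ∈ Ioc 0 x, (-(u ^ α)) ^ n / Real.Gamma (1 + α * n) =
      (-1) ^ n * (u ^ (α * n) / Real.Gamma (1 + α * n)) := fun n u hu => by
    rw [Real.rpow_mul hu.1.le, Real.rpow_natCast, neg_pow, mul_div_assoc]
  have hint : ∀ n : ℕ, Integrable (fun u => mittagLefflerKernel α (x - u) *
      ((-(u ^ α)) ^ n / Real.Gamma (1 + α * n))) (volume.restrict (Ioc 0 x)) := fun n => by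
    have h := (intervalIntegrable_mittagLefflerKernel_sub hα1 x 0 x).mul_continuousOn
      (g := fun u => (-(u ^ α)) ^ n / Real.Gamma (1 + α * n))
      (((Real.continuous_rpow_const hα0.le).neg.pow n).div_const _).continuousOn
    exact (intervalIntegrable_iff_integrableOn_Ioc_of_le hx.le).1 h
  have hsum := hasSum_integral_of_summable_integral_norm hint ?_
  · have h1 := (ha_sum (-1) (by simp)).hasSum
    have h2 := (hasSum_nat_add_iff' 1).2 h1
    have h3 := h1.sub h2
    have hval : ∀ n : ℕ, ∫ u in Ioc 0 x, mittagLefflerKernel α (x - u) *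
        ((-(u ^ α)) ^ n / Real.Gamma (1 + α * n)) =
        (-1) ^ n * a n - (-1) ^ (n + 1) * a (n + 1) := fun n => by
      rw [setIntegral_congr_fun (g := fun u => (-1) ^ n * (mittagLefflerKernel α (x - u) *
        (u ^ (α * n) / Real.Gamma (1 + α * n)))) measurableSet_Ioc, integral_const_mul, hb]
      · ring
      · intro u hu
        simp only
        rw [hterm n u hu]
        ring
    simp only [hval] at hsum
    have h4 := hsum.unique h3
    have hΓ : Real.Gamma (2 - α) = (1 - α) * Real.Gamma (1 - α) := by
      rw [← Real.Gamma_add_one (by linarith)]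
      ring_nf
    have hΓ0 : Real.Gamma (1 - α) ≠ 0 := (Real.Gamma_pos_of_pos (by linarith)).ne'
    rw [intervalIntegral.integral_of_le hx.le]
    unfold mittagLeffler
    simp only [← tsum_mul_left]
    rw [h4, sub_sub_cancel, Finset.sum_range_one, ha]
    simp only [Nat.cast_zero, mul_zero, add_zero, pow_zero, one_mul, hΓ]
    field_simp
  · refine (((ha_sum 1 (by simp)).add ((summable_nat_add_iff 1).2 (ha_sum 1 (by simp))))).congr
      fun n => ?_
    rw [one_pow, one_mul, one_pow, one_mul, ← hb]
    refine setIntegral_congr_fun measurableSet_Ioc fun u hu => ?_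
    have h1 := mittagLefflerKernel_pos hα1 (sub_nonneg.2 hu.2)
    have h2 : 0 < Real.Gamma (1 + α * n) := Real.Gamma_pos_of_pos (by positivity)
    have h3 := Real.rpow_nonneg hu.1.le (α * n)
    rw [hterm n u hu, norm_mul, norm_mul, norm_pow, norm_neg, norm_one, one_pow, one_mul,
      Real.norm_of_nonneg h1.le, Real.norm_of_nonneg (by positivity)]

lemma mittagLefflerKernel_anti {α v w : ℝ} (hα : 0 ≤ α) (hv : 0 < v) (hvw : v ≤ w) :
    mittagLefflerKernel α w ≤ mittagLefflerKernel α v :=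
  add_le_add_left (Real.rpow_le_rpow_of_nonpos hv hvw (by linarith)) _

lemma mittagLefflerKernel_mul_self_le {α v h : ℝ} (hα : α ∈ Ioo (0 : ℝ) 1) (hv : 0 ≤ v)
    (hvh : v ≤ h) (hh : h ≤ 1) :
    mittagLefflerKernel α v * v ≤ (1 + Real.Gamma (1 - α)) * h ^ (1 - α) := by
  obtain ⟨hα0, hα1⟩ := hα
  have hΓ : 0 < Real.Gamma (1 - α) := Real.Gamma_pos_of_pos (by linarith)
  rcases hv.eq_or_lt with rfl | hv
  · have := Real.rpow_nonneg hvh (1 - α)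
    rw [mul_zero]
    positivity
  · have h1 : v ^ (-α) * v = v ^ (1 - α) := by
      rw [← Real.rpow_add_one hv.ne']
      ring_nf
    have h2 : v ≤ v ^ (1 - α) := by
      simpa using Real.rpow_le_rpow_of_exponent_ge hv (hvh.trans hh) (show 1 - α ≤ 1 by linarith)
    have h3 : v ^ (1 - α) ≤ h ^ (1 - α) := by gcongr
    rw [mittagLefflerKernel, add_mul, h1, add_mul, one_mul]
    gcongr
    exact h2.trans h3

lemma mul_rpow_neg_le_rpow_sub_rpow_sub {α x h : ℝ} (hα : α ∈ Ioo (0 : ℝ) 1) (hh : 0 ≤ h)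
    (hhx : h < x) : h * x ^ (-α) ≤ (x ^ (1 - α) - (x - h) ^ (1 - α)) / (1 - α) := by
  obtain ⟨hα0, hα1⟩ := hα
  have hx : 0 < x := hh.trans_lt hhx
  have h1 := rpow_one_add_le_one_add_mul_self (s := -(h / x)) (p := 1 - α)
    (by rw [neg_le_neg_iff, div_le_one hx]; exact hhx.le) (by linarith) (by linarith)
  have h2 : x - h = x * (1 + -(h / x)) := by field_simp; ring
  have h3 : 0 ≤ 1 + -(h / x) := by
    have : h / x ≤ 1 := (div_le_one hx).2 hhx.le
    linarith
  have h4 : x ^ (1 - α) = x ^ (-α) * x := by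
    rw [← Real.rpow_add_one hx.ne']
    ring_nf
  rw [le_div_iff₀ (by linarith), h2, Real.mul_rpow hx.le h3]
  have h5 := mul_le_mul_of_nonneg_left h1 (Real.rpow_nonneg hx.le (1 - α))
  have h6 : x ^ (1 - α) * (1 + (1 - α) * -(h / x)) =
      x ^ (1 - α) - h * x ^ (-α) * (1 - α) := by
    rw [h4]
    field_simp
    ring
  linarith

/-- Comparing the Volterra equation at a first zero `x` and at `x - h` bounds `x ^ (-α)`. -/
lemma rpow_neg_le_of_mittagLeffler_nonneg_of_le {α x h C : ℝ} (hα : α ∈ Ioo (0 : ℝ) 1) (hh : 0 < h)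
    (hhx : h < x) (hh1 : h ≤ 1) (hC : 0 ≤ C)
    (hnonneg : ∀ u ∈ Icc 0 x, 0 ≤ mittagLeffler α (-(u ^ α)))
    (hlip : ∀ u ∈ Icc (x - h) x, mittagLeffler α (-(u ^ α)) ≤ C * (x - u)) :
    x ^ (-α) ≤ C * ((1 + Real.Gamma (1 - α)) * h ^ (1 - α)) := by
  have hx : 0 < x := hh.trans hhx
  have hΓ : 0 < Real.Gamma (1 - α) := Real.Gamma_pos_of_pos (by linarith [hα.2])
  have hI := intervalIntegrable_mittagLefflerKernel_mul hα
  have e1 := integral_mittagLefflerKernel_mul_mittagLeffler hα hx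
  have e2 := integral_mittagLefflerKernel_mul_mittagLeffler hα (sub_pos.2 hhx)
  rw [← intervalIntegral.integral_add_adjacent_intervals (hI x 0 (x - h)) (hI x (x - h) x)] at e1
  have m1 : ∫ u in (0 : ℝ)..(x - h), mittagLefflerKernel α (x - u) * mittagLeffler α (-(u ^ α)) ≤
      ∫ u in (0 : ℝ)..(x - h),
        mittagLefflerKernel α (x - h - u) * mittagLeffler α (-(u ^ α)) := by
    refine intervalIntegral.integral_mono_on_of_le_Ioo (sub_nonneg.2 hhx.le) (hI _ _ _)
      (hI _ _ _) fun u hu => ?_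
    exact mul_le_mul_of_nonneg_right
      (mittagLefflerKernel_anti hα.1.le (sub_pos.2 hu.2) (by linarith))
      (hnonneg u ⟨hu.1.le, by linarith [hu.2]⟩)
  have m2 : ∫ u in (x - h)..x, mittagLefflerKernel α (x - u) * mittagLeffler α (-(u ^ α)) ≤
      ∫ _u in (x - h)..x, C * ((1 + Real.Gamma (1 - α)) * h ^ (1 - α)) := by
    refine intervalIntegral.integral_mono_on (by linarith) (hI _ _ _)
      intervalIntegrable_const fun u hu => ?_
    have hv : 0 ≤ x - u := sub_nonneg.2 hu.2
    calc _ ≤ mittagLefflerKernel α (x - u) * (C * (x - u)) :=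
          mul_le_mul_of_nonneg_left (hlip u hu) (mittagLefflerKernel_pos hα.2 hv).le
      _ = C * (mittagLefflerKernel α (x - u) * (x - u)) := by ring
      _ ≤ _ := mul_le_mul_of_nonneg_left
          (mittagLefflerKernel_mul_self_le hα hv (by linarith [hu.1]) hh1) hC
  rw [intervalIntegral.integral_const, sub_sub_cancel, smul_eq_mul] at m2
  have m3 := mul_rpow_neg_le_rpow_sub_rpow_sub hα hh.le hhx
  rw [sub_div] at m3
  exact le_of_mul_le_mul_left (by linarith) hh

lemma mittagLeffler_neg_rpow_ne_zero_of_nonneg {α x : ℝ} (hα : α ∈ Ioo (0 : ℝ) 1) (hx : 0 < x)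
    (hnonneg : ∀ u ∈ Icc 0 x, 0 ≤ mittagLeffler α (-(u ^ α))) :
    mittagLeffler α (-(x ^ α)) ≠ 0 := by
  intro h0
  have hd : DifferentiableAt ℝ (fun u : ℝ => mittagLeffler α (-(u ^ α))) x :=
    (differentiable_mittagLeffler hα.1 _).comp x
      (Real.differentiableAt_rpow_const_of_ne α hx.ne').neg
  obtain ⟨C, hC, hO⟩ := hd.isBigO_sub.exists_pos
  obtain ⟨δ, hδ, hball⟩ := Metric.eventually_nhds_iff.1 hO.bound
  have hev : ∀ᶠ h in 𝓝[>] (0 : ℝ), x ^ (-α) ≤ C * ((1 + Real.Gamma (1 - α)) * h ^ (1 - α)) := by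
    filter_upwards [Ioo_mem_nhdsGT (lt_min (lt_min hx hδ) one_pos)] with h hh
    obtain ⟨hh0, hh⟩ := hh
    simp only [lt_min_iff] at hh
    refine rpow_neg_le_of_mittagLeffler_nonneg_of_le hα hh0 hh.1.1 hh.2.le hC.le hnonneg fun u hu => ?_
    have hux : |u - x| = x - u := by rw [abs_sub_comm, abs_of_nonneg (sub_nonneg.2 hu.2)]
    have := hball (y := u) (by rw [Real.dist_eq, hux]; linarith [hu.1])
    rw [h0, sub_zero, Real.norm_eq_abs, Real.norm_eq_abs, hux] at this
    exact (le_abs_self _).trans this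
  have hlim : Tendsto (fun h : ℝ => C * ((1 + Real.Gamma (1 - α)) * h ^ (1 - α))) (𝓝[>] 0)
      (𝓝 0) := by
    have h1 : Continuous fun h : ℝ => C * ((1 + Real.Gamma (1 - α)) * h ^ (1 - α)) :=
      ((Real.continuous_rpow_const (by linarith [hα.2])).const_mul _).const_mul _
    have h2 := h1.tendsto 0
    rw [Real.zero_rpow (by linarith [hα.2]), mul_zero, mul_zero] at h2
    exact h2.mono_left nhdsWithin_le_nhds
  exact absurd (ge_of_tendsto hlim hev) (not_le.2 (Real.rpow_pos_of_pos hx _))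

lemma mittagLeffler_zero (α : ℝ) : mittagLeffler α 0 = 1 := by
  rw [mittagLeffler, tsum_eq_single 0 fun n hn => by simp [hn]]
  simp

lemma mittagLeffler_neg_rpow_pos {α x : ℝ} (hα : α ∈ Ioo (0 : ℝ) 1) (hx : 0 ≤ x) :
    0 < mittagLeffler α (-(x ^ α)) := by
  by_contra! hneg
  have hcont := continuous_mittagLeffler_neg_rpow hα.1
  have hF0 : mittagLeffler α (-((0 : ℝ) ^ α)) = 1 := by
    rw [Real.zero_rpow hα.1.ne', neg_zero, mittagLeffler_zero]
  set Z : Set ℝ := Icc 0 x ∩ {u | mittagLeffler α (-(u ^ α)) ≤ 0} with hZ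
  have hcomp : IsCompact Z := isCompact_Icc.inter_right (isClosed_le hcont continuous_const)
  obtain ⟨y, ⟨hy, hy0⟩, hmin⟩ := hcomp.exists_isLeast ⟨x, ⟨hx, le_rfl⟩, hneg⟩
  have hypos : 0 < y := by
    refine hy.1.lt_of_ne' fun h => ?_
    rw [mem_ofPred_eq, h, hF0] at hy0
    linarith
  have hlt : ∀ u ∈ Ico 0 y, 0 < mittagLeffler α (-(u ^ α)) := fun u hu => by
    by_contra! h
    exact absurd (hmin ⟨⟨hu.1, hu.2.le.trans hy.2⟩, h⟩) (not_le.2 hu.2)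
  have hnonneg : ∀ u ∈ Icc 0 y, 0 ≤ mittagLeffler α (-(u ^ α)) := by
    have hcl : closure (Ico 0 y) ⊆ {u | 0 ≤ mittagLeffler α (-(u ^ α))} :=
      closure_minimal (fun u hu => (hlt u hu).le) (isClosed_le continuous_const hcont)
    rwa [closure_Ico hypos.ne] at hcl
  exact mittagLeffler_neg_rpow_ne_zero_of_nonneg hα hypos hnonneg
    (le_antisymm hy0 (hnonneg y ⟨hypos.le, le_rfl⟩))

lemma lintegral_lintegral_mul_comp_sub {f g : ℝ → ENNReal} (hf : Measurable f)
    (hg : Measurable g) :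
    ∫⁻ x, ∫⁻ u, f (x - u) * g u = (∫⁻ x, f x) * ∫⁻ u, g u := by
  rw [lintegral_lintegral_swap (by fun_prop), ← lintegral_const_mul _ hg]
  refine lintegral_congr fun u => ?_
  rw [lintegral_mul_const _ (by fun_prop), lintegral_sub_right_eq_self]

lemma lintegral_rpow_mul_exp_neg_mul_Ioi {p s : ℝ} (hp : 0 < p) (hs : 0 < s) :
    ∫⁻ t in Ioi (0 : ℝ), ENNReal.ofReal (Real.exp (-(s * t)) * t ^ (p - 1)) =
      ENNReal.ofReal ((1 / s) ^ p * Real.Gamma p) := by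
  have h := Real.integral_rpow_mul_exp_neg_mul_Ioi hp hs
  have hpos : 0 < (1 / s) ^ p * Real.Gamma p :=
    mul_pos (Real.rpow_pos_of_pos (by positivity) _) (Real.Gamma_pos_of_pos hp)
  simp only [mul_comm (Real.exp _)]
  rw [← h, ofReal_integral_eq_lintegral_ofReal (.of_integral_ne_zero (h ▸ hpos.ne'))]
  filter_upwards [ae_restrict_mem measurableSet_Ioi] with t ht
  have : (0 : ℝ) < t := ht
  simp only [Pi.zero_apply]
  positivity

lemma lintegral_exp_mul_mittagLefflerKernel {α s : ℝ} (hα : α < 1) (hs : 0 < s) :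
    ∫⁻ v in Ioi (0 : ℝ), ENNReal.ofReal (Real.exp (-(s * v)) * mittagLefflerKernel α v) =
      ENNReal.ofReal (Real.Gamma (1 - α) * (s ^ (α - 1) + s⁻¹)) := by
  have hΓ : 0 < Real.Gamma (1 - α) := Real.Gamma_pos_of_pos (by linarith)
  have h1 := lintegral_rpow_mul_exp_neg_mul_Ioi (p := 1 - α) (by linarith) hs
  have h2 := lintegral_rpow_mul_exp_neg_mul_Ioi one_pos hs
  calc _ = ∫⁻ v in Ioi (0 : ℝ), (ENNReal.ofReal (Real.exp (-(s * v)) * v ^ (1 - α - 1)) +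
        ENNReal.ofReal (Real.Gamma (1 - α)) *
          ENNReal.ofReal (Real.exp (-(s * v)) * v ^ ((1 : ℝ) - 1))) := by
        refine setLIntegral_congr_fun measurableSet_Ioi fun v hv => ?_
        have hv' : (0 : ℝ) < v := hv
        rw [← ENNReal.ofReal_mul hΓ.le, ← ENNReal.ofReal_add (by positivity) (by positivity),
          mittagLefflerKernel, sub_self, Real.rpow_zero, show 1 - α - 1 = -α by ring]
        ring_nf
    _ = _ := by
        rw [lintegral_add_left (by fun_prop), lintegral_const_mul _ (by fun_prop), h1, h2,
          ← ENNReal.ofReal_mul hΓ.le, Real.Gamma_one, Real.rpow_one,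
          ← ENNReal.ofReal_add (by positivity) (by positivity), one_div, Real.inv_rpow hs.le,
          ← Real.rpow_neg hs.le, neg_sub]
        ring_nf

/-- The Laplace transform of `x ↦ E_α(-x ^ α)`. -/
lemma lintegral_exp_mul_mittagLeffler_neg_rpow {α s : ℝ} (hα : α ∈ Ioo (0 : ℝ) 1) (hs : 0 < s) :
    ∫⁻ x in Ioi (0 : ℝ), ENNReal.ofReal (Real.exp (-(s * x)) * mittagLeffler α (-(x ^ α))) =
      ENNReal.ofReal (s ^ (α - 1) / (1 + s ^ α)) := by
  have hΓ : 0 < Real.Gamma (1 - α) := Real.Gamma_pos_of_pos (by linarith [hα.2])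
  have hcont := continuous_mittagLeffler_neg_rpow hα.1
  set A : ℝ → ENNReal := (Ioi (0 : ℝ)).indicator
    fun v => ENNReal.ofReal (Real.exp (-(s * v)) * mittagLefflerKernel α v) with hA
  set B : ℝ → ENNReal := (Ioi (0 : ℝ)).indicator
    fun u => ENNReal.ofReal (Real.exp (-(s * u)) * mittagLeffler α (-(u ^ α))) with hB
  have hAm : Measurable A := by
    have := measurable_mittagLefflerKernel α
    exact Measurable.indicator (by fun_prop) measurableSet_Ioi
  have hBm : Measurable B := by
    have := hcont.measurable
    exact Measurable.indicator (by fun_prop) measurableSet_Ioi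
  have hAB : ∀ x, ∫⁻ u, A (x - u) * B u = (Ioi (0 : ℝ)).indicator
      (fun x => ENNReal.ofReal (Real.exp (-(s * x)) * (x ^ (1 - α) / (1 - α)))) x := fun x => by
    have hind : ∀ u, A (x - u) * B u = (Ioo 0 x).indicator (fun u => ENNReal.ofReal
        (Real.exp (-(s * x)) * (mittagLefflerKernel α (x - u) * mittagLeffler α (-(u ^ α))))) u := by
      intro u
      by_cases hu : u ∈ Ioo 0 x
      · have h1 : x - u ∈ Ioi (0 : ℝ) := sub_pos.2 hu.2
        have h2 := (mittagLefflerKernel_pos hα.2 (le_of_lt h1)).le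
        rw [hA, hB, indicator_of_mem h1, indicator_of_mem (show u ∈ Ioi (0 : ℝ) from hu.1),
          indicator_of_mem hu, ← ENNReal.ofReal_mul (by positivity)]
        have h3 : Real.exp (-(s * x)) = Real.exp (-(s * (x - u))) * Real.exp (-(s * u)) := by
          rw [← Real.exp_add]
          ring_nf
        rw [h3]
        ring_nf
      · rw [indicator_of_notMem hu]
        by_cases hu0 : 0 < u
        · have : x - u ∉ Ioi (0 : ℝ) := fun h => hu ⟨hu0, sub_pos.1 h⟩
          rw [hA, indicator_of_notMem this, zero_mul]
        · rw [hB, indicator_of_notMem (show u ∉ Ioi (0 : ℝ) from hu0), mul_zero]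
    simp only [hind]
    rw [lintegral_indicator measurableSet_Ioo]
    by_cases hx : 0 < x
    · have hI := ((intervalIntegrable_mittagLefflerKernel_mul hα x 0 x).const_mul
        (Real.exp (-(s * x))))
      rw [intervalIntegrable_iff_integrableOn_Ioo_of_le hx.le] at hI
      rw [indicator_of_mem (show x ∈ Ioi (0 : ℝ) from hx),
        ← integral_mittagLefflerKernel_mul_mittagLeffler hα hx,
        ← intervalIntegral.integral_const_mul, intervalIntegral.integral_of_le hx.le,
        integral_Ioc_eq_integral_Ioo, ofReal_integral_eq_lintegral_ofReal hI]
      filter_upwards [ae_restrict_mem measurableSet_Ioo] with u hu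
      have h1 := mittagLefflerKernel_pos hα.2 (sub_nonneg.2 hu.2.le)
      have h2 := mittagLeffler_neg_rpow_pos hα hu.1.le
      simp only [Pi.zero_apply]
      positivity
    · rw [indicator_of_notMem (show x ∉ Ioi (0 : ℝ) from hx), Ioo_eq_empty hx]
      simp
  have hmain := lintegral_lintegral_mul_comp_sub hAm hBm
  simp only [hAB] at hmain
  rw [lintegral_indicator measurableSet_Ioi, hA, hB, lintegral_indicator measurableSet_Ioi,
    lintegral_indicator measurableSet_Ioi, lintegral_exp_mul_mittagLefflerKernel hα.2 hs] at hmain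
  have hrhs : ∫⁻ x in Ioi (0 : ℝ),
      ENNReal.ofReal (Real.exp (-(s * x)) * (x ^ (1 - α) / (1 - α))) =
      ENNReal.ofReal (Real.Gamma (1 - α) * s ^ (α - 2)) := by
    have h1α : 0 < 1 - α := by linarith [hα.2]
    have h := lintegral_rpow_mul_exp_neg_mul_Ioi (p := 2 - α) (by linarith) hs
    have hΓ2 : Real.Gamma (2 - α) = (1 - α) * Real.Gamma (1 - α) := by
      rw [← Real.Gamma_add_one h1α.ne']
      ring_nf
    calc _ = ∫⁻ x in Ioi (0 : ℝ), ENNReal.ofReal (1 - α)⁻¹ *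
          ENNReal.ofReal (Real.exp (-(s * x)) * x ^ (2 - α - 1)) := by
          congr 1 with x
          rw [← ENNReal.ofReal_mul (by positivity), show 2 - α - 1 = 1 - α by ring]
          ring_nf
      _ = _ := by
          rw [lintegral_const_mul _ (by fun_prop), h, ← ENNReal.ofReal_mul (by positivity), hΓ2,
            one_div, Real.inv_rpow hs.le, ← Real.rpow_neg hs.le, neg_sub]
          congr 1
          field_simp
  have hc : 0 < Real.Gamma (1 - α) * (s ^ (α - 1) + s⁻¹) := by positivity
  rw [hrhs] at hmain
  have hval : ENNReal.ofReal (Real.Gamma (1 - α) * s ^ (α - 2)) =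
      ENNReal.ofReal (Real.Gamma (1 - α) * (s ^ (α - 1) + s⁻¹)) *
        ENNReal.ofReal (s ^ (α - 1) / (1 + s ^ α)) := by
    rw [← ENNReal.ofReal_mul hc.le, Real.rpow_sub hs, Real.rpow_sub hs, Real.rpow_one,
      Real.rpow_two]
    have := Real.rpow_pos_of_pos hs α
    congr 1
    field_simp
    ring
  rw [hval] at hmain
  exact ((ENNReal.mul_right_inj (ENNReal.ofReal_pos.2 hc).ne' ENNReal.ofReal_ne_top).1 hmain).symm

lemma lintegral_rpow_div_one_add_rpow {α lam : ℝ} (hα : 0 < α) (hlam : 0 ≤ lam) :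
    ∫⁻ s in Ioo 0 lam, ENNReal.ofReal (s ^ (α - 1) / (1 + s ^ α)) =
      ENNReal.ofReal (Real.log (1 + lam ^ α) / α) := by
  have hpos : ∀ s : ℝ, 0 ≤ s → 0 < 1 + s ^ α := fun s hs => by positivity
  have hcont : ContinuousOn (fun s : ℝ => Real.log (1 + s ^ α) / α) (Icc 0 lam) := by
    refine ContinuousOn.div_const (ContinuousOn.log ?_ fun s hs => (hpos s hs.1).ne') _
    exact (continuous_const.add (Real.continuous_rpow_const hα.le)).continuousOn
  have hderiv : ∀ s ∈ Ioo 0 lam, HasDerivAt (fun s : ℝ => Real.log (1 + s ^ α) / α)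
      (s ^ (α - 1) / (1 + s ^ α)) s := fun s hs => by
    convert! (((Real.hasDerivAt_rpow_const (p := α) (Or.inl hs.1.ne')).const_add 1).log
      (hpos s hs.1.le).ne').div_const α using 1
    field_simp
  have hnonneg : ∀ s ∈ Ioo 0 lam, 0 ≤ s ^ (α - 1) / (1 + s ^ α) := fun s hs =>
    div_nonneg (Real.rpow_nonneg hs.1.le _) (hpos s hs.1.le).le
  have hint := intervalIntegral.integrableOn_deriv_of_nonneg hcont hderiv hnonneg
  have hval := intervalIntegral.integral_eq_sub_of_hasDerivAt_of_le hlam hcont hderiv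
    ((intervalIntegrable_iff_integrableOn_Ioc_of_le hlam).2 hint)
  rw [Real.zero_rpow hα.ne', add_zero, Real.log_one, zero_div, sub_zero] at hval
  rw [← hval, intervalIntegral.integral_of_le hlam, integral_Ioc_eq_integral_Ioo,
    ofReal_integral_eq_lintegral_ofReal (hint.mono_set Ioo_subset_Ioc_self)]
  filter_upwards [ae_restrict_mem measurableSet_Ioo] with s hs using hnonneg s hs

lemma lintegral_exp_neg_mul_Ioo {lam x : ℝ} (hlam : 0 ≤ lam) (hx : 0 < x) :
    ∫⁻ s in Ioo 0 lam, ENNReal.ofReal (Real.exp (-(s * x))) =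
      ENNReal.ofReal ((1 - Real.exp (-(lam * x))) / x) := by
  have hval : ∫ s in (0 : ℝ)..lam, Real.exp (-(s * x)) = (1 - Real.exp (-(lam * x))) / x := by
    have hderiv : ∀ s ∈ uIcc 0 lam,
        HasDerivAt (fun s : ℝ => -Real.exp (-(s * x)) / x) (Real.exp (-(s * x))) s := fun s _ => by
      convert! ((((hasDerivAt_id s).mul_const x).neg.exp).neg).div_const x using 1
      field_simp
      simp [mul_comm]
    rw [intervalIntegral.integral_eq_sub_of_hasDerivAt hderiv
      (Continuous.intervalIntegrable (by fun_prop) _ _), zero_mul, neg_zero, Real.exp_zero]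
    ring
  rw [← hval, intervalIntegral.integral_of_le hlam, integral_Ioc_eq_integral_Ioo,
    ofReal_integral_eq_lintegral_ofReal]
  · exact ((Continuous.integrableOn_Icc (by fun_prop)).mono_set Ioo_subset_Icc_self)
  · exact .of_forall fun s => (Real.exp_pos _).le

lemma lintegral_one_sub_exp_mul_mittagLeffler_div {α lam : ℝ} (hα : α ∈ Ioo (0 : ℝ) 1)
    (hlam : 0 ≤ lam) :
    ∫⁻ x in Ioi (0 : ℝ), ENNReal.ofReal
        ((1 - Real.exp (-(lam * x))) * mittagLeffler α (-(x ^ α)) / x) =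
      ENNReal.ofReal (Real.log (1 + lam ^ α) / α) := by
  have hm := (continuous_mittagLeffler_neg_rpow hα.1).measurable
  calc _ = ∫⁻ x in Ioi (0 : ℝ), ∫⁻ s in Ioo 0 lam,
        ENNReal.ofReal (Real.exp (-(s * x)) * mittagLeffler α (-(x ^ α))) := by
        refine setLIntegral_congr_fun measurableSet_Ioi fun x hx => ?_
        have hF := (mittagLeffler_neg_rpow_pos hα (le_of_lt hx)).le
        simp only [ENNReal.ofReal_mul (Real.exp_pos _).le]
        rw [lintegral_mul_const _ (by fun_prop), lintegral_exp_neg_mul_Ioo hlam hx,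
          ← ENNReal.ofReal_mul' hF]
        ring_nf
    _ = ∫⁻ s in Ioo 0 lam, ∫⁻ x in Ioi (0 : ℝ),
        ENNReal.ofReal (Real.exp (-(s * x)) * mittagLeffler α (-(x ^ α))) :=
        lintegral_lintegral_swap (Measurable.aemeasurable
          (((by fun_prop : Measurable fun p : ℝ × ℝ => Real.exp (-(p.2 * p.1))).mul
            (hm.comp measurable_fst)).ennreal_ofReal))
    _ = ∫⁻ s in Ioo 0 lam, ENNReal.ofReal (s ^ (α - 1) / (1 + s ^ α)) :=
        setLIntegral_congr_fun measurableSet_Ioo fun s hs =>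
          lintegral_exp_mul_mittagLeffler_neg_rpow hα hs.1
    _ = _ := lintegral_rpow_div_one_add_rpow hα.1 hlam

theorem mittagLeffler_GGC_representation (α : ℝ) (hα : α ∈ Set.Ioo (0:ℝ) 1)
    (lam : ℝ) (hlam : 0 ≤ lam) :
    1 / (1 + lam ^ α) =
      Real.exp (-(α * ∫ x in Set.Ioi (0:ℝ),
        (1 - Real.exp (-(lam * x))) * mittagLeffler α (-(x ^ α)) / x)) := by
  have hm := (continuous_mittagLeffler_neg_rpow hα.1).measurable
  have hlog : 0 ≤ Real.log (1 + lam ^ α) / α :=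
    div_nonneg (Real.log_nonneg (by linarith [Real.rpow_nonneg hlam α])) hα.1.le
  rw [integral_eq_lintegral_of_nonneg_ae, lintegral_one_sub_exp_mul_mittagLeffler_div hα hlam,
    ENNReal.toReal_ofReal hlog, mul_div_cancel₀ _ hα.1.ne', Real.exp_neg, Real.exp_log, one_div]
  · positivity
  · filter_upwards [ae_restrict_mem measurableSet_Ioi] with x hx
    have hx' : (0 : ℝ) < x := hx
    have h1 : Real.exp (-(lam * x)) ≤ 1 := Real.exp_le_one_iff.2 (by simp; positivity)
    exact div_nonneg (mul_nonneg (sub_nonneg.2 h1) (mittagLeffler_neg_rpow_pos hα hx'.le).le) hx'.le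
  · exact Measurable.aestronglyMeasurable (by fun_prop)
end
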